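/- arXiv:1302.0084 — 3 statements merged into one kernel-verified Lean document; each statement's English description precedes it below -/
import Mathlib

section
/- For any A, P > 0, with θ = A/√P, φ the standard normal density, Q(x) = ∫_x^∞ φ(y) dy, and h(p) = −p ln p − (1−p) ln(1−p) the binary entropy function (natural log), assume 2Q(θ) < 1. Then the amplitude-constrained AWGN capacity satisfies the non-asymptotic achievability bound: (1/2) ln(1+P) − C(A,P) ≤ (1/(1 − 2Q(θ))) · [ Q(θ) · ln( 1 + (A√P/(1+P)) · (φ(θ)/Q(θ)) ) + h(2Q(θ)) ]. -/
open MeasureTheory ProbabilityTheory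

open scoped Classical in
/-- Kullback–Leibler divergence (natural logarithm), valued in `EReal`:
`D(μ‖ν) = ∫ log(dμ/dν) dμ` if `μ ≪ ν` and the log-likelihood ratio is integrable,
and `+∞` otherwise. -/
noncomputable def klDiv {α : Type*} [MeasurableSpace α] (μ ν : Measure α) : EReal :=
  if μ ≪ ν ∧ Integrable (llr μ ν) μ then ((∫ x, llr μ ν x ∂μ : ℝ) : EReal) else ⊤

/-- The joint law of `(X, X+Z)` where `X ~ μ` and `Z ~ N(0,1)` is independent of `X`. -/
noncomputable def jointLaw (μ : Measure ℝ) : Measure (ℝ × ℝ) :=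
  (μ.prod (gaussianReal 0 1)).map fun p => (p.1, p.1 + p.2)

/-- The mutual information `I(X; X+Z)` for `X ~ μ` and `Z ~ N(0,1)` independent of `X`:
the KL divergence between the joint law of `(X, X+Z)` and the product of its marginals. -/
noncomputable def mutInfo (μ : Measure ℝ) : EReal :=
  klDiv (jointLaw μ) ((jointLaw μ).fst.prod (jointLaw μ).snd)

/-- The amplitude-constrained AWGN capacity `C(A,P)`: the supremum of `I(X; X+Z)` over laws of
real random variables `X` with `|X| ≤ A` almost surely and `E[X²] ≤ P`, with `Z ~ N(0,1)`
independent of `X`. -/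
noncomputable def CAP (A P : ℝ) : EReal :=
  ⨆ μ ∈ {μ : Measure ℝ | IsProbabilityMeasure μ ∧ μ {x | A < |x|} = 0 ∧ ∫ x, x ^ 2 ∂μ ≤ P},
    mutInfo μ

/-- The standard normal density `φ(y) = e^{-y²/2}/√(2π)`. -/
noncomputable def stdPhi (y : ℝ) : ℝ := Real.exp (-(y ^ 2) / 2) / Real.sqrt (2 * Real.pi)

/-- The standard normal tail function `Q(x) = ∫_x^∞ φ(y) dy`. -/
noncomputable def gaussQ (x : ℝ) : ℝ := ∫ y in Set.Ioi x, stdPhi y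

/-- The binary entropy function (natural logarithm). -/
noncomputable def binEnt (p : ℝ) : ℝ := -(p * Real.log p) - (1 - p) * Real.log (1 - p)

/-! Let `γ = N(0, P)` and take as input the law of `X ~ γ` conditioned on `|X| ≤ A`; it is
admissible because the discarded tail has second moment larger than `P`. With `p = γ(|X| > A)`,
the output density of `γ` is the mixture, with weights `p` and `1 - p`, of the output densities of
the tail and of the truncated input. Mixing raises differential entropy above the average by at most
the binary entropy of `p`, and among densities with a given second moment the Gaussian maximises
the entropy, which bounds the tail term. As `N(0, 1 + P)` is the output law of `γ`, this bounds the
output entropy of the truncated input, hence its mutual information, from below. -/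

/-- The differential entropy `-∫ f log f dν`, in nats, of a density `f` with respect to `ν`
(`0` when `f log f` is not integrable). -/
noncomputable def differentialEntropy {α : Type*} [MeasurableSpace α] (ν : Measure α)
    (f : α → ℝ) : ℝ :=
  ∫ y, Real.negMulLog (f y) ∂ν

section DifferentialEntropy

variable {α : Type*} [MeasurableSpace α] {ν : Measure α} {f g : α → ℝ}

lemma negMulLog_add_le {a b : ℝ} (ha : 0 ≤ a) (hb : 0 ≤ b) :
    Real.negMulLog (a + b) ≤ Real.negMulLog a + Real.negMulLog b := by
  rcases ha.eq_or_lt with rfl | ha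
  · simp
  rcases hb.eq_or_lt with rfl | hb
  · simp
  have hla : a * Real.log a ≤ a * Real.log (a + b) := by gcongr; linarith
  have hlb : b * Real.log b ≤ b * Real.log (a + b) := by gcongr; linarith
  simp only [Real.negMulLog]
  linarith

lemma integrable_negMulLog_mixture {p q : ℝ} (hp : 0 ≤ p) (hq : 0 ≤ q) (hpq : p + q = 1)
    (hf0 : ∀ y, 0 ≤ f y) (hg0 : ∀ y, 0 ≤ g y) (hf : Integrable f ν) (hg : Integrable g ν)
    (hfl : Integrable (fun y => Real.negMulLog (f y)) ν)
    (hgl : Integrable (fun y => Real.negMulLog (g y)) ν) :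
    Integrable (fun y => Real.negMulLog (p * f y + q * g y)) ν := by
  refine integrable_of_le_of_le
    (g₁ := fun y => p * Real.negMulLog (f y) + q * Real.negMulLog (g y))
    (g₂ := fun y => Real.negMulLog (p * f y) + Real.negMulLog (q * g y))
    (Real.continuous_negMulLog.comp_aestronglyMeasurable
      ((hf.const_mul p).add (hg.const_mul q)).aestronglyMeasurable)
    (.of_forall fun y => Real.concaveOn_negMulLog.2 (hf0 y) (hg0 y) hp hq hpq)
    (.of_forall fun y => negMulLog_add_le (mul_nonneg hp (hf0 y)) (mul_nonneg hq (hg0 y)))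
    ((hfl.const_mul p).add (hgl.const_mul q)) ?_
  simp only [Real.negMulLog_mul]
  exact ((hf.mul_const _).add (hfl.const_mul p)).add ((hg.mul_const _).add (hgl.const_mul q))

lemma differentialEntropy_const_mul (c : ℝ) (hf : Integrable f ν) (hf1 : ∫ y, f y ∂ν = 1)
    (hfl : Integrable (fun y => Real.negMulLog (f y)) ν) :
    differentialEntropy ν (fun y => c * f y) =
      Real.negMulLog c + c * differentialEntropy ν f := by
  simp only [differentialEntropy, Real.negMulLog_mul]
  rw [integral_add (hf.mul_const _) (hfl.const_mul c), integral_mul_const, integral_const_mul,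
    hf1, one_mul]

lemma differentialEntropy_mixture_le {p : ℝ} (hp0 : 0 ≤ p) (hp1 : p ≤ 1)
    (hf0 : ∀ y, 0 ≤ f y) (hg0 : ∀ y, 0 ≤ g y) (hf : Integrable f ν) (hg : Integrable g ν)
    (hf1 : ∫ y, f y ∂ν = 1) (hg1 : ∫ y, g y ∂ν = 1)
    (hfl : Integrable (fun y => Real.negMulLog (f y)) ν)
    (hgl : Integrable (fun y => Real.negMulLog (g y)) ν) :
    differentialEntropy ν (fun y => p * f y + (1 - p) * g y) ≤
      p * differentialEntropy ν f + (1 - p) * differentialEntropy ν g + binEnt p := by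
  have hq0 : 0 ≤ 1 - p := sub_nonneg.2 hp1
  have hpf : Integrable (fun y => Real.negMulLog (p * f y)) ν := by
    simp only [Real.negMulLog_mul]
    exact (hf.mul_const _).add (hfl.const_mul p)
  have hqg : Integrable (fun y => Real.negMulLog ((1 - p) * g y)) ν := by
    simp only [Real.negMulLog_mul]
    exact (hg.mul_const _).add (hgl.const_mul (1 - p))
  calc differentialEntropy ν (fun y => p * f y + (1 - p) * g y)
      ≤ ∫ y, (Real.negMulLog (p * f y) + Real.negMulLog ((1 - p) * g y)) ∂ν :=
        integral_mono
          (integrable_negMulLog_mixture hp0 hq0 (add_sub_cancel p 1) hf0 hg0 hf hg hfl hgl)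
          (hpf.add hqg)
          fun y => negMulLog_add_le (mul_nonneg hp0 (hf0 y)) (mul_nonneg hq0 (hg0 y))
    _ = differentialEntropy ν (fun y => p * f y)
          + differentialEntropy ν (fun y => (1 - p) * g y) := integral_add hpf hqg
    _ = p * differentialEntropy ν f + (1 - p) * differentialEntropy ν g + binEnt p := by
        rw [differentialEntropy_const_mul p hf hf1 hfl,
          differentialEntropy_const_mul (1 - p) hg hg1 hgl, binEnt]
        simp only [Real.negMulLog]
        ring

lemma negMulLog_le_neg_mul_log_add_sub {a b : ℝ} (ha : 0 ≤ a) (hb : 0 < b) :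
    Real.negMulLog a ≤ -(a * Real.log b) + (b - a) := by
  have h := Real.negMulLog_le_one_sub_self (div_nonneg ha hb.le)
  calc Real.negMulLog a = Real.negMulLog (a / b * b) := by rw [div_mul_cancel₀ a hb.ne']
    _ = b * Real.negMulLog (a / b) + a / b * Real.negMulLog b := Real.negMulLog_mul _ _
    _ ≤ b * (1 - a / b) + a / b * Real.negMulLog b := by gcongr
    _ = -(a * Real.log b) + (b - a) := by simp only [Real.negMulLog]; field_simp; ring

lemma differentialEntropy_le_neg_integral_mul_log (hf0 : ∀ y, 0 ≤ f y) (hg0 : ∀ y, 0 < g y)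
    (hf : Integrable f ν) (hg : Integrable g ν) (hfg : ∫ y, f y ∂ν = ∫ y, g y ∂ν)
    (hfl : Integrable (fun y => Real.negMulLog (f y)) ν)
    (hfgl : Integrable (fun y => f y * Real.log (g y)) ν) :
    differentialEntropy ν f ≤ -∫ y, f y * Real.log (g y) ∂ν :=
  calc differentialEntropy ν f
      ≤ ∫ y, (-(f y * Real.log (g y)) + (g y - f y)) ∂ν :=
        integral_mono hfl (hfgl.neg.add (hg.sub hf))
          fun y => negMulLog_le_neg_mul_log_add_sub (hf0 y) (hg0 y)
    _ = -∫ y, f y * Real.log (g y) ∂ν := by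
        have hgf : ∫ y, (g y - f y) ∂ν = 0 := by rw [integral_sub hg hf, hfg, sub_self]
        have hsum := integral_add hfgl.neg (hg.sub hf)
        simp only [Pi.neg_apply, Pi.sub_apply, hgf, add_zero, integral_neg] at hsum
        exact hsum

end DifferentialEntropy

section GaussianEntropy

variable {v : NNReal}

lemma log_gaussianPDFReal (m : ℝ) (hv : v ≠ 0) (y : ℝ) :
    Real.log (gaussianPDFReal m v y) =
      -(Real.log (2 * Real.pi * v) / 2) - (y - m) ^ 2 / (2 * v) := by
  have hv' : (0 : ℝ) < v := NNReal.coe_pos.2 (pos_iff_ne_zero.2 hv)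
  rw [gaussianPDFReal, Real.log_mul (by positivity) (by positivity), Real.log_inv, Real.log_exp,
    Real.log_sqrt (by positivity)]
  ring

lemma integrable_sq_gaussianReal (m : ℝ) (v : NNReal) :
    Integrable (fun x : ℝ => x ^ 2) (gaussianReal m v) :=
  (memLp_id_gaussianReal (μ := m) (v := v) 2).integrable_sq

lemma integral_sq_gaussianReal (m : ℝ) (v : NNReal) :
    ∫ x, x ^ 2 ∂(gaussianReal m v) = m ^ 2 + v := by
  have h := variance_eq_sub (memLp_id_gaussianReal (μ := m) (v := v) 2)
  simp only [variance_id_gaussianReal, id_eq, integral_id_gaussianReal, Pi.pow_apply] at h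
  linarith

lemma integrable_mul_gaussianPDFReal_iff {g : ℝ → ℝ} (m : ℝ) (hv : v ≠ 0) :
    Integrable (fun y => gaussianPDFReal m v y * g y) ↔ Integrable g (gaussianReal m v) := by
  rw [gaussianReal_of_var_ne_zero _ hv,
    integrable_withDensity_iff_integrable_smul' (measurable_gaussianPDF m v)
      (.of_forall fun _ => gaussianPDF_lt_top)]
  simp only [toReal_gaussianPDF, smul_eq_mul]

lemma integrable_mul_log_gaussianPDFReal {f : ℝ → ℝ} (hf : Integrable f)
    (hf2 : Integrable fun y => f y * y ^ 2) (hv : v ≠ 0) :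
    Integrable (fun y => f y * Real.log (gaussianPDFReal 0 v y)) := by
  simp only [log_gaussianPDFReal 0 hv, sub_zero, mul_sub, mul_div_assoc']
  exact (hf.mul_const _).sub (hf2.div_const _)

lemma integral_mul_log_gaussianPDFReal {f : ℝ → ℝ} (hf : Integrable f) (hf1 : ∫ y, f y = 1)
    (hf2 : Integrable fun y => f y * y ^ 2) (hv : v ≠ 0) :
    ∫ y, f y * Real.log (gaussianPDFReal 0 v y) =
      -(Real.log (2 * Real.pi * v) / 2) - (∫ y, f y * y ^ 2) / (2 * v) := by
  simp only [log_gaussianPDFReal 0 hv, sub_zero, mul_sub, mul_div_assoc']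
  rw [integral_sub (by simpa only [mul_div_assoc'] using hf.mul_const _) (hf2.div_const _),
    integral_mul_const, hf1, one_mul, integral_div]

lemma integral_gaussianPDFReal_mul (m : ℝ) (hv : v ≠ 0) (g : ℝ → ℝ) :
    ∫ y, gaussianPDFReal m v y * g y = ∫ y, g y ∂(gaussianReal m v) := by
  simp only [integral_gaussianReal_eq_integral_smul hv, smul_eq_mul]

lemma differentialEntropy_gaussianPDFReal (hv : v ≠ 0) :
    differentialEntropy volume (gaussianPDFReal 0 v) =
      Real.log (2 * Real.pi * v) / 2 + 1 / 2 := by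
  have hv' : (v : ℝ) ≠ 0 := NNReal.coe_ne_zero.2 hv
  simp only [differentialEntropy, Real.negMulLog, neg_mul, integral_neg]
  rw [integral_mul_log_gaussianPDFReal (integrable_gaussianPDFReal 0 v)
    (integral_gaussianPDFReal_eq_one 0 hv)
    ((integrable_mul_gaussianPDFReal_iff 0 hv).2 (integrable_sq_gaussianReal 0 v)) hv,
    integral_gaussianPDFReal_mul 0 hv, integral_sq_gaussianReal]
  field_simp
  ring

lemma differentialEntropy_le_gaussian {f : ℝ → ℝ} (hf0 : ∀ y, 0 ≤ f y) (hf : Integrable f)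
    (hf1 : ∫ y, f y = 1) (hf2 : Integrable fun y => f y * y ^ 2) (hv : v ≠ 0)
    (hfv : ∫ y, f y * y ^ 2 ≤ v) (hfl : Integrable fun y => Real.negMulLog (f y)) :
    differentialEntropy volume f ≤ differentialEntropy volume (gaussianPDFReal 0 v) := by
  have hv' : (0 : ℝ) < v := NNReal.coe_pos.2 (pos_iff_ne_zero.2 hv)
  calc differentialEntropy volume f
      ≤ -∫ y, f y * Real.log (gaussianPDFReal 0 v y) :=
        differentialEntropy_le_neg_integral_mul_log hf0 (fun y => gaussianPDFReal_pos 0 v y hv) hf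
          (integrable_gaussianPDFReal 0 v) (by rw [hf1, integral_gaussianPDFReal_eq_one 0 hv]) hfl
          (integrable_mul_log_gaussianPDFReal hf hf2 hv)
    _ = Real.log (2 * Real.pi * v) / 2 + (∫ y, f y * y ^ 2) / (2 * v) := by
        rw [integral_mul_log_gaussianPDFReal hf hf1 hf2 hv]; ring
    _ ≤ Real.log (2 * Real.pi * v) / 2 + v / (2 * v) := by gcongr
    _ = differentialEntropy volume (gaussianPDFReal 0 v) := by
        rw [differentialEntropy_gaussianPDFReal hv]; field_simp

end GaussianEntropy

section ConditionalMeasure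

variable {α : Type*} [MeasurableSpace α] {μ : Measure α} {s : Set α}

lemma measureReal_mul_integral_cond (μ : Measure α) [IsFiniteMeasure μ] (s : Set α)
    (f : α → ℝ) :
    μ.real s * ∫ x, f x ∂μ[|s] = ∫ x in s, f x ∂μ := by
  rcases eq_or_ne (μ s) 0 with hs | hs
  · rw [measureReal_def, hs, Measure.restrict_eq_zero.2 hs]
    simp
  · have hs' : (μ s).toReal ≠ 0 := ENNReal.toReal_ne_zero.2 ⟨hs, measure_ne_top μ s⟩
    rw [ProbabilityTheory.cond, integral_smul_measure, smul_eq_mul, ENNReal.toReal_inv,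
      measureReal_def, mul_inv_cancel_left₀ hs']

lemma integral_eq_cond_add_cond_compl [IsFiniteMeasure μ] (hs : MeasurableSet s) {f : α → ℝ}
    (hf : Integrable f μ) :
    ∫ x, f x ∂μ = μ.real s * ∫ x, f x ∂μ[|s] + μ.real sᶜ * ∫ x, f x ∂μ[|sᶜ] := by
  rw [measureReal_mul_integral_cond, measureReal_mul_integral_cond, integral_add_compl hs hf]

lemma memLp_cond {f : α → ℝ} {q : ENNReal} (hf : MemLp f q μ) (hs : μ s ≠ 0) :
    MemLp f q μ[|s] :=
  hf.restrict s |>.smul_measure (ENNReal.inv_ne_top.2 hs)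

end ConditionalMeasure

section OutputDensity

/-- The Lebesgue density `y ↦ E[φ(y - X)]` of the channel output `X + Z`, where `X ~ μ` and
`Z ~ N(0,1)` is independent of `X`. -/
noncomputable def outputDensity (μ : Measure ℝ) (y : ℝ) : ℝ :=
  ∫ x, gaussianPDFReal x 1 y ∂μ

lemma measurable_gaussianPDFReal_one :
    Measurable fun p : ℝ × ℝ => gaussianPDFReal p.1 1 p.2 := by
  unfold gaussianPDFReal
  fun_prop

lemma measurable_gaussianPDF_one : Measurable fun p : ℝ × ℝ => gaussianPDF p.1 1 p.2 :=
  measurable_gaussianPDFReal_one.ennreal_ofReal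

lemma measurable_gaussianPDFReal_one_left (y : ℝ) :
    Measurable fun x => gaussianPDFReal x 1 y := by
  unfold gaussianPDFReal
  fun_prop

lemma gaussianPDFReal_one_le_one (x y : ℝ) : gaussianPDFReal x 1 y ≤ 1 := by
  rw [gaussianPDFReal]
  refine mul_le_one₀ (inv_le_one_of_one_le₀ ?_) (Real.exp_nonneg _) ?_
  · rw [Real.one_le_sqrt, NNReal.coe_one]
    linarith [Real.pi_gt_three]
  · rw [Real.exp_le_one_iff, neg_div, neg_nonpos]
    positivity

lemma integrable_gaussianPDFReal_one_left (μ : Measure ℝ) [IsFiniteMeasure μ] (y : ℝ) :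
    Integrable (fun x => gaussianPDFReal x 1 y) μ :=
  .of_bound (measurable_gaussianPDFReal_one_left y).aestronglyMeasurable 1
    (.of_forall fun x => by
      rw [Real.norm_of_nonneg (gaussianPDFReal_nonneg _ _ _)]
      exact gaussianPDFReal_one_le_one x y)

lemma measurable_outputDensity (μ : Measure ℝ) [SFinite μ] : Measurable (outputDensity μ) :=
  measurable_gaussianPDFReal_one.stronglyMeasurable.integral_prod_left'.measurable

lemma ofReal_outputDensity (μ : Measure ℝ) [IsFiniteMeasure μ] (y : ℝ) :
    ENNReal.ofReal (outputDensity μ y) = ∫⁻ x, gaussianPDF x 1 y ∂μ :=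
  ofReal_integral_eq_lintegral_ofReal (integrable_gaussianPDFReal_one_left μ y)
    (.of_forall fun _ => gaussianPDFReal_nonneg _ _ _)

lemma lintegral_const_add_gaussianReal (x : ℝ) {f : ℝ → ENNReal} (hf : Measurable f) :
    ∫⁻ z, f (x + z) ∂(gaussianReal 0 1) = ∫⁻ y, gaussianPDF x 1 y * f y := by
  rw [← lintegral_map hf (measurable_const_add x), gaussianReal_map_const_add, zero_add,
    gaussianReal_of_var_ne_zero _ one_ne_zero,
    lintegral_withDensity_eq_lintegral_mul _ (measurable_gaussianPDF x 1) hf]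
  rfl

variable (μ : Measure ℝ) [IsProbabilityMeasure μ]

lemma outputDensity_pos (y : ℝ) : 0 < outputDensity μ y := by
  refine (integral_pos_iff_support_of_nonneg (fun _ => gaussianPDFReal_nonneg _ _ _)
    (integrable_gaussianPDFReal_one_left μ y)).2 ?_
  have hsupp : (Function.support fun x => gaussianPDFReal x 1 y) = Set.univ :=
    Function.support_eq_univ fun x => (gaussianPDFReal_pos x 1 y one_ne_zero).ne'
  simp [hsupp]

lemma outputDensity_le_one (y : ℝ) : outputDensity μ y ≤ 1 :=
  (integral_mono (integrable_gaussianPDFReal_one_left μ y) (integrable_const 1)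
    fun x => gaussianPDFReal_one_le_one x y).trans_eq (by simp)

lemma conv_gaussianReal_eq_withDensity :
    μ ∗ gaussianReal 0 1 = volume.withDensity fun y => ENNReal.ofReal (outputDensity μ y) := by
  refine Measure.ext_of_lintegral _ fun f hf => ?_
  have hpf : Measurable fun p : ℝ × ℝ => gaussianPDF p.1 1 p.2 * f p.2 :=
    measurable_gaussianPDF_one.mul (hf.comp measurable_snd)
  calc ∫⁻ y, f y ∂(μ ∗ gaussianReal 0 1)
      = ∫⁻ x, ∫⁻ y, gaussianPDF x 1 y * f y ∂volume ∂μ := by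
        simp only [Measure.lintegral_conv hf, lintegral_const_add_gaussianReal _ hf]
    _ = ∫⁻ y, ∫⁻ x, gaussianPDF x 1 y * f y ∂μ := lintegral_lintegral_swap hpf.aemeasurable
    _ = ∫⁻ y, ENNReal.ofReal (outputDensity μ y) * f y := by
        refine lintegral_congr fun y => ?_
        have hpdf : Measurable fun x => gaussianPDF x 1 y :=
          (measurable_gaussianPDFReal_one_left y).ennreal_ofReal
        rw [ofReal_outputDensity, lintegral_mul_const _ hpdf]
    _ = ∫⁻ y, f y ∂(volume.withDensity fun y => ENNReal.ofReal (outputDensity μ y)) :=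
        (lintegral_withDensity_eq_lintegral_mul _
          (measurable_outputDensity μ).ennreal_ofReal hf).symm

variable {μ} in
lemma integrable_outputDensity_mul_iff {f : ℝ → ℝ} :
    Integrable (fun y => outputDensity μ y * f y) ↔ Integrable f (μ ∗ gaussianReal 0 1) := by
  rw [conv_gaussianReal_eq_withDensity, integrable_withDensity_iff_integrable_smul'
    (measurable_outputDensity μ).ennreal_ofReal (.of_forall fun _ => ENNReal.ofReal_lt_top)]
  simp only [ENNReal.toReal_ofReal (outputDensity_pos μ _).le, smul_eq_mul]

lemma integral_outputDensity_mul (f : ℝ → ℝ) :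
    ∫ y, outputDensity μ y * f y = ∫ y, f y ∂(μ ∗ gaussianReal 0 1) := by
  rw [conv_gaussianReal_eq_withDensity, integral_withDensity_eq_integral_toReal_smul
    (measurable_outputDensity μ).ennreal_ofReal (.of_forall fun _ => ENNReal.ofReal_lt_top)]
  simp only [ENNReal.toReal_ofReal (outputDensity_pos μ _).le, smul_eq_mul]

lemma integrable_outputDensity : Integrable (outputDensity μ) := by
  simpa only [mul_one] using
    integrable_outputDensity_mul_iff.2 (integrable_const (μ := μ ∗ gaussianReal 0 1) (1 : ℝ))

lemma integral_outputDensity : ∫ y, outputDensity μ y = 1 := by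
  simpa using integral_outputDensity_mul μ fun _ => 1

lemma outputDensity_gaussianReal (v : NNReal) :
    outputDensity (gaussianReal 0 v) =ᵐ[volume] gaussianPDFReal 0 (v + 1) := by
  have hv : v + 1 ≠ 0 := by positivity
  have hconv : volume.withDensity (fun y => ENNReal.ofReal (outputDensity (gaussianReal 0 v) y)) =
      volume.withDensity (gaussianPDF 0 (v + 1)) := by
    rw [← conv_gaussianReal_eq_withDensity, gaussianReal_conv_gaussianReal, add_zero,
      gaussianReal_of_var_ne_zero _ hv]
  filter_upwards [(withDensity_eq_iff_of_sigmaFinite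
    (measurable_outputDensity _).ennreal_ofReal.aemeasurable
    (measurable_gaussianPDF 0 (v + 1)).aemeasurable).1 hconv] with y hy
  exact (ENNReal.ofReal_eq_ofReal_iff (outputDensity_pos _ y).le
    (gaussianPDFReal_nonneg 0 (v + 1) y)).1 hy

lemma outputDensity_eq_mixture (μ : Measure ℝ) [IsProbabilityMeasure μ] {s : Set ℝ}
    (hs : MeasurableSet s) (y : ℝ) :
    outputDensity μ y =
      μ.real s * outputDensity μ[|s] y + (1 - μ.real s) * outputDensity μ[|sᶜ] y := by
  rw [← probReal_compl_eq_one_sub hs]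
  exact integral_eq_cond_add_cond_compl hs (integrable_gaussianPDFReal_one_left μ y)

variable {μ}

lemma integral_const_add_sq_gaussianReal (x : ℝ) :
    ∫ z, (x + z) ^ 2 ∂(gaussianReal 0 1) = x ^ 2 + 1 := by
  have hmap : (gaussianReal 0 1).map (x + ·) = gaussianReal x 1 := by
    rw [gaussianReal_map_const_add, zero_add]
  rw [← NNReal.coe_one, ← integral_sq_gaussianReal, ← hmap,
    integral_map (by fun_prop) (by fun_prop)]

lemma memLp_id_conv_gaussianReal (hμ : MemLp id 2 μ) : MemLp id 2 (μ ∗ gaussianReal 0 1) := by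
  rw [Measure.conv, memLp_map_measure_iff (by fun_prop) (by fun_prop)]
  exact (hμ.comp_fst _).add ((memLp_id_gaussianReal 2).comp_snd μ)

lemma integrable_outputDensity_mul_sq (hμ : MemLp id 2 μ) :
    Integrable fun y => outputDensity μ y * y ^ 2 :=
  integrable_outputDensity_mul_iff.2 (memLp_id_conv_gaussianReal hμ).integrable_sq

lemma integral_outputDensity_mul_sq (hμ : MemLp id 2 μ) :
    ∫ y, outputDensity μ y * y ^ 2 = ∫ x, x ^ 2 ∂μ + 1 := by
  have hμ2 : Integrable (fun x : ℝ => x ^ 2) μ := hμ.integrable_sq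
  have hconv : Integrable (fun y : ℝ => y ^ 2) (μ ∗ gaussianReal 0 1) :=
    (memLp_id_conv_gaussianReal hμ).integrable_sq
  rw [integral_outputDensity_mul, integral_conv hconv]
  simp only [integral_const_add_sq_gaussianReal]
  rw [integral_add hμ2 (integrable_const 1)]
  simp

lemma neg_log_outputDensity_le (hμ : MemLp id 2 μ) (y : ℝ) :
    -Real.log (outputDensity μ y) ≤ Real.log (2 * Real.pi) / 2 + y ^ 2 + ∫ x, x ^ 2 ∂μ := by
  have hμ2 : Integrable (fun x : ℝ => x ^ 2) μ := hμ.integrable_sq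
  have hlog (x : ℝ) : Real.log (gaussianPDFReal x 1 y) =
      -(Real.log (2 * Real.pi) / 2) - (y - x) ^ 2 / 2 := by
    simp [log_gaussianPDFReal x one_ne_zero y]
  have hlogi : Integrable (fun x => Real.log (gaussianPDFReal x 1 y)) μ := by
    simp only [hlog]
    exact (integrable_const _).sub (((memLp_const y).sub hμ).integrable_sq.div_const 2)
  have hexp (x : ℝ) : Real.exp (Real.log (gaussianPDFReal x 1 y)) = gaussianPDFReal x 1 y :=
    Real.exp_log (gaussianPDFReal_pos x 1 y one_ne_zero)
  have hjensen : ∫ x, Real.log (gaussianPDFReal x 1 y) ∂μ ≤ Real.log (outputDensity μ y) := by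
    rw [Real.le_log_iff_exp_le (outputDensity_pos μ y), outputDensity]
    have h := convexOn_exp.map_integral_le (g := Real.exp) Real.continuous_exp.continuousOn
      isClosed_univ (.of_forall fun _ => Set.mem_univ _) hlogi
      (by simpa only [Function.comp_def, hexp] using integrable_gaussianPDFReal_one_left μ y)
    simpa only [hexp] using h
  have hlower : ∫ x, (-(Real.log (2 * Real.pi) / 2 + y ^ 2) - x ^ 2) ∂μ ≤
      ∫ x, Real.log (gaussianPDFReal x 1 y) ∂μ := by
    refine integral_mono ((integrable_const _).sub hμ2) hlogi fun x => ?_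
    simp only [hlog]
    nlinarith [sq_nonneg (y + x)]
  rw [integral_sub (integrable_const _) hμ2] at hlower
  simp only [integral_const, probReal_univ, one_smul] at hlower
  linarith

lemma integrable_negMulLog_outputDensity (hμ : MemLp id 2 μ) :
    Integrable fun y => Real.negMulLog (outputDensity μ y) := by
  have hmaj : Integrable fun y => outputDensity μ y *
      (Real.log (2 * Real.pi) / 2 + y ^ 2 + ∫ x, x ^ 2 ∂μ) := by
    simp only [mul_add]
    exact (((integrable_outputDensity μ).mul_const _).add
      (integrable_outputDensity_mul_sq hμ)).add ((integrable_outputDensity μ).mul_const _)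
  refine hmaj.mono' (Real.continuous_negMulLog.measurable.comp
    (measurable_outputDensity μ)).aestronglyMeasurable (.of_forall fun y => ?_)
  rw [Real.norm_of_nonneg
    (Real.negMulLog_nonneg (outputDensity_pos μ y).le (outputDensity_le_one μ y)),
    Real.negMulLog, neg_mul_comm]
  exact mul_le_mul_of_nonneg_left (neg_log_outputDensity_le hμ y) (outputDensity_pos μ y).le

end OutputDensity

section MutualInformation

lemma jointLaw_eq_withDensity (μ : Measure ℝ) [SFinite μ] :
    jointLaw μ = (μ.prod volume).withDensity fun p => gaussianPDF p.1 1 p.2 := by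
  refine Measure.ext_of_lintegral _ fun f hf => ?_
  calc ∫⁻ p, f p ∂(jointLaw μ)
      = ∫⁻ x, ∫⁻ z, f (x, x + z) ∂(gaussianReal 0 1) ∂μ := by
        rw [jointLaw, lintegral_map hf (by fun_prop), lintegral_prod _ (by fun_prop)]
    _ = ∫⁻ x, ∫⁻ y, gaussianPDF x 1 y * f (x, y) ∂volume ∂μ :=
        lintegral_congr fun x =>
          lintegral_const_add_gaussianReal x (f := fun y => f (x, y)) (by fun_prop)
    _ = ∫⁻ p, gaussianPDF p.1 1 p.2 * f p ∂(μ.prod volume) :=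
        (lintegral_prod _ (measurable_gaussianPDF_one.mul hf).aemeasurable).symm
    _ = ∫⁻ p, f p ∂((μ.prod volume).withDensity fun p => gaussianPDF p.1 1 p.2) :=
        (lintegral_withDensity_eq_lintegral_mul _ measurable_gaussianPDF_one hf).symm

lemma jointLaw_fst (μ : Measure ℝ) [SFinite μ] : (jointLaw μ).fst = μ := by
  rw [jointLaw, Measure.fst, Measure.map_map (by fun_prop) (by fun_prop)]
  exact Measure.fst_prod

lemma jointLaw_snd (μ : Measure ℝ) : (jointLaw μ).snd = μ ∗ gaussianReal 0 1 := by
  rw [jointLaw, Measure.snd, Measure.map_map (by fun_prop) (by fun_prop)]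
  rfl

variable (μ : Measure ℝ) [IsProbabilityMeasure μ]

lemma jointLaw_marginals_eq_withDensity :
    (jointLaw μ).fst.prod (jointLaw μ).snd =
      (μ.prod volume).withDensity fun p => ENNReal.ofReal (outputDensity μ p.2) := by
  rw [jointLaw_fst, jointLaw_snd, conv_gaussianReal_eq_withDensity,
    prod_withDensity_right (measurable_outputDensity μ).ennreal_ofReal]

lemma measurable_gaussianPDF_div_outputDensity :
    Measurable fun p : ℝ × ℝ => gaussianPDF p.1 1 p.2 / ENNReal.ofReal (outputDensity μ p.2) :=
  measurable_gaussianPDF_one.div ((measurable_outputDensity μ).comp measurable_snd).ennreal_ofReal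

lemma jointLaw_eq_withDensity_marginals :
    jointLaw μ = ((jointLaw μ).fst.prod (jointLaw μ).snd).withDensity
      fun p => gaussianPDF p.1 1 p.2 / ENNReal.ofReal (outputDensity μ p.2) := by
  have hout : Measurable fun p : ℝ × ℝ => ENNReal.ofReal (outputDensity μ p.2) :=
    ((measurable_outputDensity μ).comp measurable_snd).ennreal_ofReal
  rw [jointLaw_marginals_eq_withDensity,
    ← withDensity_mul _ hout (measurable_gaussianPDF_div_outputDensity μ), jointLaw_eq_withDensity]
  congr 1 with p
  exact (ENNReal.mul_div_cancel (ENNReal.ofReal_pos.2 (outputDensity_pos μ p.2)).ne'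
    ENNReal.ofReal_ne_top).symm

lemma jointLaw_absolutelyContinuous :
    jointLaw μ ≪ (jointLaw μ).fst.prod (jointLaw μ).snd := by
  conv_lhs => rw [jointLaw_eq_withDensity_marginals]
  exact withDensity_absolutelyContinuous _ _

lemma llr_jointLaw :
    llr (jointLaw μ) ((jointLaw μ).fst.prod (jointLaw μ).snd) =ᵐ[jointLaw μ]
      fun p => Real.log (gaussianPDFReal p.1 1 p.2) - Real.log (outputDensity μ p.2) := by
  have : IsProbabilityMeasure (jointLaw μ) := Measure.isProbabilityMeasure_map (by fun_prop)
  have hrn := Measure.rnDeriv_withDensity ((jointLaw μ).fst.prod (jointLaw μ).snd)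
    (measurable_gaussianPDF_div_outputDensity μ)
  rw [← jointLaw_eq_withDensity_marginals] at hrn
  filter_upwards [(jointLaw_absolutelyContinuous μ).ae_le hrn] with p hp
  rw [llr, hp, ENNReal.toReal_div, toReal_gaussianPDF,
    ENNReal.toReal_ofReal (outputDensity_pos μ p.2).le,
    Real.log_div (gaussianPDFReal_pos p.1 1 p.2 one_ne_zero).ne' (outputDensity_pos μ p.2).ne']

lemma gaussianPDFReal_const_add (x z : ℝ) :
    gaussianPDFReal x 1 (x + z) = gaussianPDFReal 0 1 z := by
  simp [gaussianPDFReal]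

lemma integrable_log_gaussianPDFReal :
    Integrable (fun z => Real.log (gaussianPDFReal 0 1 z)) (gaussianReal 0 1) :=
  (integrable_mul_gaussianPDFReal_iff 0 one_ne_zero).1 <|
    integrable_mul_log_gaussianPDFReal (integrable_gaussianPDFReal 0 1)
      ((integrable_mul_gaussianPDFReal_iff 0 one_ne_zero).2 (integrable_sq_gaussianReal 0 1))
      one_ne_zero

lemma measurable_log_gaussianPDFReal_one :
    Measurable fun p : ℝ × ℝ => Real.log (gaussianPDFReal p.1 1 p.2) :=
  Real.measurable_log.comp measurable_gaussianPDFReal_one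

lemma integrable_log_gaussianPDFReal_jointLaw :
    Integrable (fun p => Real.log (gaussianPDFReal p.1 1 p.2)) (jointLaw μ) := by
  rw [jointLaw, integrable_map_measure
    measurable_log_gaussianPDFReal_one.aestronglyMeasurable (by fun_prop)]
  simpa only [Function.comp_def, gaussianPDFReal_const_add] using
    integrable_log_gaussianPDFReal.comp_snd μ

lemma integral_log_gaussianPDFReal_jointLaw :
    ∫ p, Real.log (gaussianPDFReal p.1 1 p.2) ∂(jointLaw μ) =
      -differentialEntropy volume (gaussianPDFReal 0 1) := by
  rw [jointLaw, integral_map (by fun_prop)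
    measurable_log_gaussianPDFReal_one.aestronglyMeasurable]
  simp only [gaussianPDFReal_const_add]
  rw [integral_fun_snd fun z => Real.log (gaussianPDFReal 0 1 z),
    ← integral_gaussianPDFReal_mul 0 one_ne_zero]
  simp only [differentialEntropy, Real.negMulLog, neg_mul, integral_neg, neg_neg, probReal_univ,
    one_smul]

variable {μ}

lemma integrable_log_outputDensity_jointLaw (hμ : MemLp id 2 μ) :
    Integrable (fun p => Real.log (outputDensity μ p.2)) (jointLaw μ) := by
  have hsnd : Integrable (fun y => Real.log (outputDensity μ y)) (jointLaw μ).snd := by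
    rw [jointLaw_snd, ← integrable_outputDensity_mul_iff]
    simpa [Real.negMulLog] using (integrable_negMulLog_outputDensity hμ).neg
  exact hsnd.comp_measurable measurable_snd

lemma integral_log_outputDensity_jointLaw (μ : Measure ℝ) [IsProbabilityMeasure μ] :
    ∫ p, Real.log (outputDensity μ p.2) ∂(jointLaw μ) =
      -differentialEntropy volume (outputDensity μ) := by
  have hlog : Measurable fun y => Real.log (outputDensity μ y) :=
    Real.measurable_log.comp (measurable_outputDensity μ)
  rw [← integral_map (μ := jointLaw μ) measurable_snd.aemeasurable hlog.aestronglyMeasurable,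
    ← Measure.snd, jointLaw_snd, ← integral_outputDensity_mul]
  simp only [differentialEntropy, Real.negMulLog, neg_mul, integral_neg, neg_neg]

theorem mutInfo_eq_differentialEntropy_sub (hμ : MemLp id 2 μ) :
    mutInfo μ = ((differentialEntropy volume (outputDensity μ) -
      differentialEntropy volume (gaussianPDFReal 0 1) : ℝ) : EReal) := by
  have hnoise := integrable_log_gaussianPDFReal_jointLaw μ
  have hout := integrable_log_outputDensity_jointLaw hμ
  rw [mutInfo, klDiv, if_pos ⟨jointLaw_absolutelyContinuous μ,
    (integrable_congr (llr_jointLaw μ)).2 (hnoise.sub hout)⟩, integral_congr_ae (llr_jointLaw μ),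
    integral_sub hnoise hout, integral_log_gaussianPDFReal_jointLaw,
    integral_log_outputDensity_jointLaw, neg_sub_neg]

end MutualInformation

section GaussianTail

lemma gaussianPDFReal_zero_one : gaussianPDFReal 0 1 = stdPhi := by
  ext y
  simp [gaussianPDFReal, stdPhi, div_eq_inv_mul]

lemma stdPhi_pos (y : ℝ) : 0 < stdPhi y := by
  unfold stdPhi
  positivity

lemma stdPhi_abs (y : ℝ) : stdPhi |y| = stdPhi y := by
  simp only [stdPhi, sq_abs]

lemma integrable_stdPhi : Integrable stdPhi :=
  gaussianPDFReal_zero_one ▸ integrable_gaussianPDFReal 0 1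

lemma integrable_stdPhi_mul_sq : Integrable fun x => stdPhi x * x ^ 2 := by
  rw [← gaussianPDFReal_zero_one]
  exact (integrable_mul_gaussianPDFReal_iff 0 one_ne_zero).2 (integrable_sq_gaussianReal 0 1)

lemma integrable_stdPhi_mul_id : Integrable fun x => stdPhi x * x := by
  rw [← gaussianPDFReal_zero_one]
  exact (integrable_mul_gaussianPDFReal_iff 0 one_ne_zero).2
    ((memLp_id_gaussianReal (μ := 0) (v := 1) 1).integrable le_rfl)

lemma hasDerivAt_stdPhi (x : ℝ) : HasDerivAt stdPhi (-(x * stdPhi x)) x := by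
  have hexponent : HasDerivAt (fun y : ℝ => -(y ^ 2) / 2) (-x) x := by
    convert! (hasDerivAt_pow 2 x).neg.div_const 2 using 1
    simp only [Nat.cast_ofNat, Nat.add_one_sub_one, pow_one]
    ring
  convert! hexponent.exp.div_const (Real.sqrt (2 * Real.pi)) using 1
  rw [stdPhi]
  ring

lemma integral_Ioi_stdPhi_mul_sq (t : ℝ) :
    ∫ x in Set.Ioi t, stdPhi x * x ^ 2 = t * stdPhi t + gaussQ t := by
  have hderiv (x : ℝ) (_ : x ∈ Set.Ici t) :
      HasDerivAt (fun y => -(stdPhi y * y)) (stdPhi x * x ^ 2 - stdPhi x) x := by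
    convert! ((hasDerivAt_stdPhi x).mul (hasDerivAt_id x)).neg using 1
    simp only [id_eq, neg_mul, mul_one, neg_add_rev, neg_neg]
    ring
  have hint : IntegrableOn (fun x => stdPhi x * x ^ 2 - stdPhi x) (Set.Ioi t) :=
    (integrable_stdPhi_mul_sq.sub integrable_stdPhi).integrableOn
  have hlim := tendsto_zero_of_hasDerivAt_of_integrableOn_Ioi
    (fun x hx => hderiv x (Set.Ioi_subset_Ici_self hx)) hint
    integrable_stdPhi_mul_id.neg.integrableOn
  have hftc := integral_Ioi_of_hasDerivAt_of_tendsto' hderiv hint hlim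
  rw [integral_sub integrable_stdPhi_mul_sq.integrableOn integrable_stdPhi.integrableOn] at hftc
  rw [gaussQ]
  linarith

lemma gaussQ_pos (t : ℝ) : 0 < gaussQ t := by
  rw [gaussQ, setIntegral_pos_iff_support_of_nonneg_ae
    (.of_forall fun x => (stdPhi_pos x).le) integrable_stdPhi.integrableOn,
    Function.support_eq_univ fun x => (stdPhi_pos x).ne']
  simp

lemma measurableSet_lt_abs (t : ℝ) : MeasurableSet {x : ℝ | t < |x|} :=
  measurableSet_lt measurable_const measurable_id.abs

lemma setIntegral_lt_abs_of_even {f : ℝ → ℝ} (hf : ∀ x, f |x| = f x) {t : ℝ} (ht : 0 ≤ t) :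
    ∫ x in {x : ℝ | t < |x|}, f x = 2 * ∫ x in Set.Ioi t, f x := by
  have habs (x : ℝ) : {x : ℝ | t < |x|}.indicator f x = (Set.Ioi t).indicator f |x| := by
    simp only [Set.indicator, Set.mem_ofPred_eq, Set.mem_Ioi, hf]
  rw [← integral_indicator (measurableSet_lt_abs t)]
  simp only [habs]
  rw [integral_comp_abs, setIntegral_indicator measurableSet_Ioi,
    Set.inter_eq_right.2 (Set.Ioi_subset_Ioi ht)]

lemma setIntegral_gaussianReal_lt_abs {g : ℝ → ℝ} (hg : ∀ x, g |x| = g x) {t : ℝ} (ht : 0 ≤ t) :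
    ∫ x in {x : ℝ | t < |x|}, g x ∂(gaussianReal 0 1) =
      2 * ∫ x in Set.Ioi t, stdPhi x * g x := by
  rw [← setIntegral_lt_abs_of_even (f := fun x => stdPhi x * g x)
    (fun x => by rw [stdPhi_abs, hg]) ht,
    gaussianReal_of_var_ne_zero _ one_ne_zero, setIntegral_withDensity_eq_setIntegral_toReal_smul
      (measurable_gaussianPDF 0 1) (.of_forall fun _ => gaussianPDF_lt_top) _
      (measurableSet_lt_abs t)]
  simp only [toReal_gaussianPDF, gaussianPDFReal_zero_one, smul_eq_mul]

variable {A P : ℝ}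

lemma gaussianReal_eq_map_sqrt_mul (hP : 0 ≤ P) :
    gaussianReal 0 P.toNNReal = (gaussianReal 0 1).map (Real.sqrt P * ·) := by
  rw [gaussianReal_map_const_mul, mul_zero, mul_one]
  congr 1
  ext
  simp [Real.sq_sqrt hP, hP]

lemma setIntegral_gaussianReal_lt_abs_scale (hP : 0 < P) {f : ℝ → ℝ} (hf : Measurable f) :
    ∫ x in {x : ℝ | A < |x|}, f x ∂(gaussianReal 0 P.toNNReal) =
      ∫ z in {z : ℝ | A / Real.sqrt P < |z|}, f (Real.sqrt P * z) ∂(gaussianReal 0 1) := by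
  have hsqrt := Real.sqrt_pos.2 hP
  have hpre : (Real.sqrt P * ·) ⁻¹' {x : ℝ | A < |x|} = {z : ℝ | A / Real.sqrt P < |z|} := by
    ext z
    simp only [Set.mem_preimage, Set.mem_ofPred_eq, abs_mul, abs_of_pos hsqrt, div_lt_iff₀' hsqrt]
  rw [gaussianReal_eq_map_sqrt_mul hP.le, setIntegral_map (measurableSet_lt_abs A)
    hf.aestronglyMeasurable (by fun_prop), hpre]

lemma gaussianReal_real_lt_abs (hA : 0 ≤ A) (hP : 0 < P) :
    (gaussianReal 0 P.toNNReal).real {x | A < |x|} = 2 * gaussQ (A / Real.sqrt P) := by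
  have h := setIntegral_gaussianReal_lt_abs_scale (A := A) hP (measurable_const (a := (1 : ℝ)))
  rw [setIntegral_gaussianReal_lt_abs (fun _ => rfl) (by positivity)] at h
  simpa [gaussQ] using h

lemma setIntegral_sq_gaussianReal_lt_abs (hA : 0 ≤ A) (hP : 0 < P) :
    ∫ x in {x : ℝ | A < |x|}, x ^ 2 ∂(gaussianReal 0 P.toNNReal) =
      P * (2 * (A / Real.sqrt P * stdPhi (A / Real.sqrt P) + gaussQ (A / Real.sqrt P))) := by
  rw [setIntegral_gaussianReal_lt_abs_scale hP (by fun_prop)]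
  simp only [mul_pow, Real.sq_sqrt hP.le]
  rw [integral_const_mul,
    setIntegral_gaussianReal_lt_abs (g := fun x => x ^ 2) sq_abs (by positivity),
    integral_Ioi_stdPhi_mul_sq]

end GaussianTail

section Achievability

lemma differentialEntropy_outputDensity_le_cond {μ : Measure ℝ} [IsProbabilityMeasure μ]
    (hμ : MemLp id 2 μ) {s : Set ℝ} (hs : MeasurableSet s) (hs0 : μ s ≠ 0) (hsc0 : μ sᶜ ≠ 0) :
    differentialEntropy volume (outputDensity μ) ≤
      μ.real s * differentialEntropy volume (outputDensity μ[|s]) +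
        (1 - μ.real s) * differentialEntropy volume (outputDensity μ[|sᶜ]) +
        binEnt (μ.real s) := by
  have := cond_isProbabilityMeasure hs0
  have := cond_isProbabilityMeasure hsc0
  rw [funext (outputDensity_eq_mixture μ hs)]
  exact differentialEntropy_mixture_le measureReal_nonneg measureReal_le_one
    (fun y => (outputDensity_pos _ y).le) (fun y => (outputDensity_pos _ y).le)
    (integrable_outputDensity _) (integrable_outputDensity _)
    (integral_outputDensity _) (integral_outputDensity _)
    (integrable_negMulLog_outputDensity (memLp_cond hμ hs0))
    (integrable_negMulLog_outputDensity (memLp_cond hμ hsc0))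

lemma differentialEntropy_outputDensity_le {μ : Measure ℝ} [IsProbabilityMeasure μ]
    (hμ : MemLp id 2 μ) :
    differentialEntropy volume (outputDensity μ) ≤
      Real.log (2 * Real.pi * (1 + ∫ x, x ^ 2 ∂μ)) / 2 + 1 / 2 := by
  have hW : 0 ≤ ∫ x, x ^ 2 ∂μ := integral_nonneg fun x => sq_nonneg x
  have hw : Real.toNNReal (1 + ∫ x, x ^ 2 ∂μ) ≠ 0 := (Real.toNNReal_pos.2 (by positivity)).ne'
  have hcoe : (Real.toNNReal (1 + ∫ x, x ^ 2 ∂μ) : ℝ) = 1 + ∫ x, x ^ 2 ∂μ :=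
    Real.coe_toNNReal _ (by positivity)
  rw [← hcoe, ← differentialEntropy_gaussianPDFReal hw]
  refine differentialEntropy_le_gaussian (fun y => (outputDensity_pos μ y).le)
    (integrable_outputDensity μ) (integral_outputDensity μ) (integrable_outputDensity_mul_sq hμ)
    hw ?_ (integrable_negMulLog_outputDensity hμ)
  rw [integral_outputDensity_mul_sq hμ, hcoe, add_comm]

lemma differentialEntropy_outputDensity_gaussianReal (v : NNReal) :
    differentialEntropy volume (outputDensity (gaussianReal 0 v)) =
      Real.log (2 * Real.pi * (1 + v)) / 2 + 1 / 2 := by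
  have hv : 1 + v ≠ 0 := by positivity
  have hcongr : differentialEntropy volume (outputDensity (gaussianReal 0 v)) =
      differentialEntropy volume (gaussianPDFReal 0 (1 + v)) :=
    integral_congr_ae ((add_comm v 1 ▸ outputDensity_gaussianReal v).fun_comp Real.negMulLog)
  rw [hcongr, differentialEntropy_gaussianPDFReal hv, NNReal.coe_add, NNReal.coe_one]

theorem le_mutInfo_cond_compl_gaussianReal (v : NNReal) {s : Set ℝ} (hs : MeasurableSet s)
    (hs0 : 0 < (gaussianReal 0 v).real s) (hs1 : (gaussianReal 0 v).real s < 1) :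
    ((1 / 2 * Real.log (1 + v) - 1 / (1 - (gaussianReal 0 v).real s) *
      ((gaussianReal 0 v).real s / 2 *
          Real.log ((1 + ∫ x, x ^ 2 ∂(gaussianReal 0 v)[|s]) / (1 + v)) +
        binEnt ((gaussianReal 0 v).real s)) : ℝ) : EReal) ≤
      mutInfo (gaussianReal 0 v)[|sᶜ] := by
  set γ := gaussianReal 0 v
  set p := γ.real s
  set W := ∫ x, x ^ 2 ∂γ[|s]
  have hγ : MemLp id 2 γ := memLp_id_gaussianReal 2
  have hp : 0 < 1 - p := sub_pos.2 hs1
  have hW : 0 ≤ W := integral_nonneg fun x => sq_nonneg x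
  have hγs : γ s ≠ 0 := (measureReal_ne_zero_iff).1 hs0.ne'
  have hγsc : γ sᶜ ≠ 0 :=
    (measureReal_ne_zero_iff).1 ((probReal_compl_eq_one_sub hs).trans_ne hp.ne')
  have := cond_isProbabilityMeasure hγs
  have := cond_isProbabilityMeasure hγsc
  have hmix := differentialEntropy_outputDensity_le_cond hγ hs hγs hγsc
  have htail := mul_le_mul_of_nonneg_left
    (differentialEntropy_outputDensity_le (memLp_cond hγ hγs)) hs0.le
  rw [differentialEntropy_outputDensity_gaussianReal,
    Real.log_mul (by positivity) (by positivity)] at hmix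
  rw [Real.log_mul (by positivity) (by positivity)] at htail
  rw [mutInfo_eq_differentialEntropy_sub (memLp_cond hγ hγsc), EReal.coe_le_coe_iff,
    differentialEntropy_gaussianPDFReal one_ne_zero, NNReal.coe_one, mul_one,
    Real.log_div (by positivity) (by positivity), sub_le_comm, one_div_mul_eq_div (1 - p),
    le_div_iff₀' hp]
  linarith

/-- The law of `X ~ N(0,P)` conditioned on `|X| ≤ A`, the input that attains the
achievability bound; it is the conditional law on the complement of the tail `{A < |x|}`. -/
noncomputable def truncatedGaussian (A P : ℝ) : Measure ℝ :=
  (gaussianReal 0 P.toNNReal)[|{x : ℝ | A < |x|}ᶜ]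

variable {A P : ℝ}

lemma mutInfo_truncatedGaussian_le_CAP (hA : 0 ≤ A) (hP : 0 < P)
    (hQ : 2 * gaussQ (A / Real.sqrt P) < 1) : mutInfo (truncatedGaussian A P) ≤ CAP A P := by
  set γ := gaussianReal 0 P.toNNReal
  set T := {x : ℝ | A < |x|}
  have hT : MeasurableSet T := measurableSet_lt_abs A
  have hγTc : γ.real Tᶜ = 1 - 2 * gaussQ (A / Real.sqrt P) := by
    rw [probReal_compl_eq_one_sub hT, gaussianReal_real_lt_abs hA hP]
  have hγTc_pos : 0 < γ.real Tᶜ := hγTc ▸ sub_pos.2 hQ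
  have hprob : IsProbabilityMeasure (truncatedGaussian A P) :=
    cond_isProbabilityMeasure ((measureReal_ne_zero_iff).1 hγTc_pos.ne')
  have hsupp : truncatedGaussian A P T = 0 := by
    rw [truncatedGaussian, cond_apply hT.compl, Set.compl_inter_self, measure_empty, mul_zero]
  have hpower : ∫ x, x ^ 2 ∂(truncatedGaussian A P) ≤ P := by
    have hcompl := integral_add_compl hT (integrable_sq_gaussianReal 0 P.toNNReal)
    rw [setIntegral_sq_gaussianReal_lt_abs hA hP, integral_sq_gaussianReal,
      Real.coe_toNNReal P hP.le] at hcompl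
    have hexcess : 0 ≤ P * (A / Real.sqrt P * stdPhi (A / Real.sqrt P)) := by
      have := stdPhi_pos (A / Real.sqrt P)
      positivity
    refine le_of_mul_le_mul_left ?_ hγTc_pos
    rw [truncatedGaussian, measureReal_mul_integral_cond, hγTc]
    linarith
  exact le_iSup₂_of_le (truncatedGaussian A P) ⟨hprob, hsupp, hpower⟩ le_rfl

lemma integral_sq_cond_gaussianReal_lt_abs (hA : 0 ≤ A) (hP : 0 < P) :
    ∫ x, x ^ 2 ∂(gaussianReal 0 P.toNNReal)[|{x : ℝ | A < |x|}] =
      P + A * Real.sqrt P * (stdPhi (A / Real.sqrt P) / gaussQ (A / Real.sqrt P)) := by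
  have hQ := gaussQ_pos (A / Real.sqrt P)
  have hsqrt := Real.sqrt_pos.2 hP
  refine mul_left_cancel₀ (mul_pos two_pos hQ).ne' ?_
  rw [← gaussianReal_real_lt_abs hA hP, measureReal_mul_integral_cond,
    setIntegral_sq_gaussianReal_lt_abs hA hP, gaussianReal_real_lt_abs hA hP]
  field_simp
  linear_combination -(A * stdPhi (A / Real.sqrt P)) * Real.sq_sqrt hP.le

lemma le_mutInfo_truncatedGaussian (hA : 0 ≤ A) (hP : 0 < P)
    (hQ : 2 * gaussQ (A / Real.sqrt P) < 1) :
    ((1 / 2 * Real.log (1 + P) - 1 / (1 - 2 * gaussQ (A / Real.sqrt P)) *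
      (gaussQ (A / Real.sqrt P) * Real.log (1 + (A * Real.sqrt P / (1 + P)) *
          (stdPhi (A / Real.sqrt P) / gaussQ (A / Real.sqrt P))) +
        binEnt (2 * gaussQ (A / Real.sqrt P))) : ℝ) : EReal) ≤
      mutInfo (truncatedGaussian A P) := by
  have htail := gaussianReal_real_lt_abs hA hP
  have hratio : (1 + ∫ x, x ^ 2 ∂(gaussianReal 0 P.toNNReal)[|{x : ℝ | A < |x|}]) / (1 + P) =
      1 + (A * Real.sqrt P / (1 + P)) *
        (stdPhi (A / Real.sqrt P) / gaussQ (A / Real.sqrt P)) := by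
    rw [integral_sq_cond_gaussianReal_lt_abs hA hP, ← add_assoc, add_div,
      div_self (by positivity : 1 + P ≠ 0)]
    ring
  have h := le_mutInfo_cond_compl_gaussianReal P.toNNReal (measurableSet_lt_abs A)
    (by rw [htail]; linarith [gaussQ_pos (A / Real.sqrt P)]) (by rwa [htail])
  rwa [htail, mul_div_cancel_left₀ _ two_ne_zero, Real.coe_toNNReal P hP.le, hratio] at h

end Achievability

/-- Non-asymptotic achievability bound for the amplitude-constrained capacity:
for all `A, P > 0` with `θ = A/√P` and `2Q(θ) < 1`,
`(1/2)ln(1+P) - C(A,P) ≤ (1/(1-2Q(θ))) [Q(θ) ln(1 + (A√P/(1+P))(φ(θ)/Q(θ))) + h(2Q(θ))]`. -/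
theorem smith_capacity_nonasymptotic_achievability
    (A P : ℝ) (hA : 0 < A) (hP : 0 < P)
    (θ : ℝ) (hθ : θ = A / Real.sqrt P) (hQ : 2 * gaussQ θ < 1) :
    (((1 / 2) * Real.log (1 + P) : ℝ) : EReal) - CAP A P ≤
      (((1 / (1 - 2 * gaussQ θ)) *
        (gaussQ θ * Real.log (1 + (A * Real.sqrt P / (1 + P)) * (stdPhi θ / gaussQ θ))
          + binEnt (2 * gaussQ θ)) : ℝ) : EReal) := by
  subst hθ
  have hcap := (le_mutInfo_truncatedGaussian hA.le hP hQ).trans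
    (mutInfo_truncatedGaussian_le_CAP hA.le hP hQ)
  refine (EReal.sub_le_sub le_rfl hcap).trans_eq ?_
  rw [← EReal.coe_sub, sub_sub_cancel]
end

section
/- Fix A, P > 0 and n ≥ 1. Define u_n(A) as the infimum of D( P_{X^n} ∗ N(0, I_n) ‖ N(0, 1+P)^{⊗n} ) over all probability measures P_{X^n} on ℝ^n supported in the cube [−A, A]^n, where P_{X^n} ∗ N(0, I_n) denotes the convolution with the n-fold product of standard Gaussians (the law of X^n + Z^n with Z^n standard Gaussian independent of X^n), and N(0,1+P)^{⊗n} is the n-fold product of N(0,1+P). Then u_n(A) = n · u_1(A). -/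
open MeasureTheory ProbabilityTheory

/-- The law of the noise vector `Z^n`: the `n`-fold product of standard Gaussians `N(0,1)`. -/
noncomputable def stdGaussianPi (n : ℕ) : Measure (Fin n → ℝ) :=
  Measure.pi fun _ => gaussianReal 0 1

/-- The `I`-projection value `u_n(A)`: the infimum of
`D(P_{X^n} ∗ N(0,I_n) ‖ N(0,1+P)^{⊗n})` over probability measures `P_{X^n}` on `ℝ^n`
supported in the cube `[-A,A]^n`; the convolution is realized as the law of `X^n + Z^n`. -/
noncomputable def uIproj (n : ℕ) (A P : ℝ) : EReal :=
  ⨅ μ ∈ {μ : Measure (Fin n → ℝ) | IsProbabilityMeasure μ ∧ μ {x | ∃ j, A < |x j|} = 0},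
    klDiv ((μ.prod (stdGaussianPi n)).map fun p => p.1 + p.2)
      (Measure.pi fun _ : Fin n => gaussianReal 0 (1 + P).toNNReal)

/-!
Any law on a product space satisfies `∑ i, D(ρ_i ‖ Q_i) ≤ D(ρ ‖ ⨂ Q_i)`, where `ρ_i` are its
marginals: by the chain rule the divergence splits off one coordinate at a time, and each
conditional divergence is at least the divergence of the marginal, by data processing. Equality
holds when `ρ` is itself a product. Hence minimizing `D(· ‖ ⨂ Q_i)` over a class `C` decouples as
soon as there are classes `D_i` on the factors containing the marginals of every law in `C`, and
whose products all belong to `C`. The outputs of a memoryless additive channel with inputs in a box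
have this property.
-/

open scoped ENNReal

section KLTensorization

variable {α β : Type*} [MeasurableSpace α] [MeasurableSpace β]

lemma klDiv_map_measurableEquiv (e : α ≃ᵐ β) (μ ν : Measure α)
    [IsFiniteMeasure μ] [IsFiniteMeasure ν] :
    InformationTheory.klDiv (μ.map e) (ν.map e) = InformationTheory.klDiv μ ν := by
  refine le_antisymm (InformationTheory.klDiv_map_le μ ν e.measurable) ?_
  simpa [Measure.map_map e.symm.measurable e.measurable] using
    InformationTheory.klDiv_map_le (μ.map e) (ν.map e) e.symm.measurable

lemma klDiv_prod_left (μ : Measure α) [IsProbabilityMeasure μ] (ν R : Measure β)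
    [IsFiniteMeasure ν] [IsFiniteMeasure R] :
    InformationTheory.klDiv (μ.prod ν) (μ.prod R) = InformationTheory.klDiv ν R := by
  have h := InformationTheory.klDiv_compProd_left ν R (Kernel.const β μ)
  rw [Measure.compProd_const, Measure.compProd_const] at h
  rw [← h, ← Measure.prod_swap (μ := ν), ← Measure.prod_swap (μ := R)]
  exact klDiv_map_measurableEquiv MeasurableEquiv.prodComm _ _

lemma klDiv_prod (μ Q : Measure α) (ν R : Measure β) [IsProbabilityMeasure μ] [IsFiniteMeasure Q]
    [IsProbabilityMeasure ν] [IsProbabilityMeasure R] :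
    InformationTheory.klDiv (μ.prod ν) (Q.prod R)
      = InformationTheory.klDiv μ Q + InformationTheory.klDiv ν R := by
  have h := InformationTheory.klDiv_compProd_eq_add μ Q (Kernel.const α ν) (Kernel.const α R)
  simpa only [Measure.compProd_const, klDiv_prod_left] using h

lemma klDiv_fst_add_klDiv_snd_le [StandardBorelSpace β] (ρ : Measure (α × β)) (Q : Measure α)
    (R : Measure β) [IsProbabilityMeasure ρ] [IsFiniteMeasure Q] [IsProbabilityMeasure R] :
    InformationTheory.klDiv ρ.fst Q + InformationTheory.klDiv ρ.snd R
      ≤ InformationTheory.klDiv ρ (Q.prod R) := by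
  have : Nonempty β := nonempty_of_isProbabilityMeasure R
  have chain := InformationTheory.klDiv_compProd_eq_add ρ.fst Q ρ.condKernel (Kernel.const α R)
  rw [ρ.disintegrate ρ.condKernel, Measure.compProd_const, Measure.compProd_const] at chain
  have snd_le : InformationTheory.klDiv ρ.snd (ρ.fst.prod R).snd
      ≤ InformationTheory.klDiv ρ (ρ.fst.prod R) :=
    InformationTheory.klDiv_map_le ρ (ρ.fst.prod R) measurable_snd
  rw [Measure.snd_prod] at snd_le
  rw [chain]
  gcongr

end KLTensorization

section KLPi

universe u v

lemma klDiv_pi_option {ι : Type u} [Fintype ι] {X : Option ι → Type v}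
    [∀ i, MeasurableSpace (X i)] (ρ : Measure (∀ i, X i)) [IsFiniteMeasure ρ]
    (Q : ∀ i, Measure (X i)) [∀ i, IsFiniteMeasure (Q i)] :
    InformationTheory.klDiv ρ (Measure.pi Q)
      = InformationTheory.klDiv (ρ.map (MeasurableEquiv.piOptionEquivProd X))
          ((Measure.pi fun i => Q (some i)).prod (Q none)) := by
  rw [← klDiv_map_measurableEquiv (MeasurableEquiv.piOptionEquivProd X),
    ← Measure.pi_map_piOptionEquivProd Q, MeasurableEquiv.map_map_symm]

lemma klDiv_map_some_add_klDiv_map_none_le {ι : Type u} [Fintype ι] {X : Option ι → Type v}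
    [∀ i, MeasurableSpace (X i)] [StandardBorelSpace (X none)]
    (ρ : Measure (∀ i, X i)) [IsProbabilityMeasure ρ]
    (Q : ∀ i, Measure (X i)) [∀ i, IsProbabilityMeasure (Q i)] :
    InformationTheory.klDiv (ρ.map fun x i => x (some i)) (Measure.pi fun i => Q (some i))
        + InformationTheory.klDiv (ρ.map (Function.eval none)) (Q none)
      ≤ InformationTheory.klDiv ρ (Measure.pi Q) := by
  let splitNone := MeasurableEquiv.piOptionEquivProd X
  have := Measure.isProbabilityMeasure_map (μ := ρ) splitNone.measurable.aemeasurable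
  have fst_eq : (ρ.map splitNone).fst = ρ.map fun x i => x (some i) :=
    Measure.map_map measurable_fst splitNone.measurable
  have snd_eq : (ρ.map splitNone).snd = ρ.map (Function.eval none) :=
    Measure.map_map measurable_snd splitNone.measurable
  rw [klDiv_pi_option, ← fst_eq, ← snd_eq]
  exact klDiv_fst_add_klDiv_snd_le _ _ _

lemma klDiv_pi_congrLeft {ι κ : Type u} [Fintype ι] [Fintype κ] (e : ι ≃ κ) {X : κ → Type v}
    [∀ i, MeasurableSpace (X i)] (ρ : Measure (∀ i, X i)) [IsFiniteMeasure ρ]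
    (Q : ∀ i, Measure (X i)) [∀ i, IsFiniteMeasure (Q i)] :
    InformationTheory.klDiv ρ (Measure.pi Q)
      = InformationTheory.klDiv (ρ.map (MeasurableEquiv.piCongrLeft X e).symm)
          (Measure.pi fun i => Q (e i)) := by
  rw [← klDiv_map_measurableEquiv (MeasurableEquiv.piCongrLeft X e).symm,
    ← (measurePreserving_piCongrLeft Q e).map_eq, MeasurableEquiv.map_symm_map]

lemma sum_klDiv_map_eval_le {ι : Type u} [hι : Fintype ι] {X : ι → Type v}
    [∀ i, MeasurableSpace (X i)] [∀ i, StandardBorelSpace (X i)]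
    (ρ : Measure (∀ i, X i)) [IsProbabilityMeasure ρ]
    (Q : ∀ i, Measure (X i)) [∀ i, IsProbabilityMeasure (Q i)] :
    ∑ i, InformationTheory.klDiv (ρ.map (Function.eval i)) (Q i)
      ≤ InformationTheory.klDiv ρ (Measure.pi Q) := by
  revert X
  -- `@` prevents `X` from being introduced, so that it stays inside the motive.
  refine @(Fintype.induction_empty_option ?of_equiv ?empty ?option ι (h_fintype := hι))
  case of_equiv =>
    intro ι κ _ e ih X _ _ ρ _ Q _
    let := Fintype.ofEquiv κ e.symm
    let reindex := (MeasurableEquiv.piCongrLeft X e).symm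
    have := Measure.isProbabilityMeasure_map (μ := ρ) reindex.measurable.aemeasurable
    have map_eval_reindex (i : ι) :
        (ρ.map reindex).map (Function.eval i) = ρ.map (Function.eval (e i)) :=
      Measure.map_map (measurable_pi_apply i) reindex.measurable
    rw [klDiv_pi_congrLeft e, ← e.sum_comp]
    simpa only [map_eval_reindex] using ih (ρ.map reindex) fun i => Q (e i)
  case empty =>
    intro X _ _ ρ _ Q _
    simp
  case option =>
    intro ι _ ih X _ _ ρ _ Q _
    have restrict_meas : Measurable fun (x : ∀ i, X i) (i : ι) => x (some i) := by fun_prop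
    have := Measure.isProbabilityMeasure_map (μ := ρ) restrict_meas.aemeasurable
    have map_eval_restrict (i : ι) :
        (ρ.map fun x i => x (some i)).map (Function.eval i) = ρ.map (Function.eval (some i)) :=
      Measure.map_map (measurable_pi_apply i) restrict_meas
    calc ∑ i, InformationTheory.klDiv (ρ.map (Function.eval i)) (Q i)
        = ∑ i, InformationTheory.klDiv ((ρ.map fun x i => x (some i)).map (Function.eval i))
              (Q (some i))
            + InformationTheory.klDiv (ρ.map (Function.eval none)) (Q none) := by
          simp only [Fintype.sum_option, map_eval_restrict, add_comm]
      _ ≤ InformationTheory.klDiv (ρ.map fun x i => x (some i)) (Measure.pi fun i => Q (some i))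
            + InformationTheory.klDiv (ρ.map (Function.eval none)) (Q none) := by
          gcongr
          exact ih _ _
      _ ≤ InformationTheory.klDiv ρ (Measure.pi Q) :=
          klDiv_map_some_add_klDiv_map_none_le ρ Q

lemma klDiv_pi {ι : Type u} [hι : Fintype ι] {X : ι → Type v} [∀ i, MeasurableSpace (X i)]
    (ν Q : ∀ i, Measure (X i)) [∀ i, IsProbabilityMeasure (ν i)] [∀ i, IsProbabilityMeasure (Q i)] :
    InformationTheory.klDiv (Measure.pi ν) (Measure.pi Q)
      = ∑ i, InformationTheory.klDiv (ν i) (Q i) := by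
  revert X
  refine @(Fintype.induction_empty_option ?of_equiv ?empty ?option ι (h_fintype := hι))
  case of_equiv =>
    intro ι κ _ e ih X _ ν Q _ _
    let := Fintype.ofEquiv κ e.symm
    rw [klDiv_pi_congrLeft e, ← (measurePreserving_piCongrLeft ν e).map_eq,
      MeasurableEquiv.map_symm_map, ih, ← e.sum_comp]
  case empty =>
    intro X _ ν Q _ _
    obtain rfl : ν = Q := Subsingleton.elim ν Q
    simp [InformationTheory.klDiv_self]
  case option =>
    intro ι _ ih X _ ν Q _ _
    rw [klDiv_pi_option, ← Measure.pi_map_piOptionEquivProd ν, MeasurableEquiv.map_map_symm,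
      klDiv_prod, ih, Fintype.sum_option, add_comm]

end KLPi

section IProjection

/-- The value of the `I`-projection (Csiszár) of `Q` onto a class `C` of laws: the infimum of the
divergence from `Q` over `C`, equal to `∞` when `C` is empty. -/
noncomputable def iProj {α : Type*} [MeasurableSpace α] (C : Set (Measure α)) (Q : Measure α) :
    ℝ≥0∞ :=
  ⨅ ρ ∈ C, InformationTheory.klDiv ρ Q

lemma iInf_sum_pi {ι : Type*} [Fintype ι] {α : ι → Type*} (f : ∀ i, α i → ℝ≥0∞) :
    ⨅ a : ∀ i, α i, ∑ i, f i (a i) = ∑ i, ⨅ x, f i x := by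
  by_cases h : ∀ i, Nonempty (α i)
  · classical
    have pointwise_min (t : Finset ι) (a b : ∀ i, α i) :
        ∃ c : ∀ i, α i, ∀ i ∈ t, f i (c i) ≤ f i (a i) ∧ f i (c i) ≤ f i (b i) :=
      ⟨fun i => if f i (a i) ≤ f i (b i) then a i else b i, fun i _ => by
        dsimp only
        split_ifs with hab
        · exact ⟨le_rfl, hab⟩
        · exact ⟨(not_le.mp hab).le, le_rfl⟩⟩
    rw [ENNReal.iInf_sum pointwise_min]
    exact Finset.sum_congr rfl fun i _ => (Function.surjective_eval i).iInf_comp (f i)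
  · obtain ⟨i, hi⟩ := not_forall.mp h
    rw [not_nonempty_iff] at hi
    have : IsEmpty (∀ i, α i) := isEmpty_pi.mpr ⟨i, hi⟩
    rw [iInf_of_empty, eq_comm, ENNReal.sum_eq_top]
    exact ⟨i, Finset.mem_univ i, iInf_of_empty _⟩

lemma iProj_pi {ι : Type*} [Fintype ι] {X : ι → Type*} [∀ i, MeasurableSpace (X i)]
    [∀ i, StandardBorelSpace (X i)] {C : Set (Measure (∀ i, X i))} {D : ∀ i, Set (Measure (X i))}
    (Q : ∀ i, Measure (X i)) [∀ i, IsProbabilityMeasure (Q i)]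
    (hC : ∀ ρ ∈ C, IsProbabilityMeasure ρ) (hD : ∀ i, ∀ ν ∈ D i, IsProbabilityMeasure ν)
    (map_eval_mem : ∀ ρ ∈ C, ∀ i, ρ.map (Function.eval i) ∈ D i)
    (pi_mem : ∀ ν : ∀ i, Measure (X i), (∀ i, ν i ∈ D i) → Measure.pi ν ∈ C) :
    iProj C (Measure.pi Q) = ∑ i, iProj (D i) (Q i) := by
  refine le_antisymm ?_ (le_iInf₂ fun ρ hρ => ?_)
  · simp_rw [iProj, iInf_subtype', ← iInf_sum_pi]
    refine le_iInf fun ν => ?_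
    have (i : ι) : IsProbabilityMeasure (ν i : Measure (X i)) := hD i _ (ν i).2
    rw [← klDiv_pi]
    exact iInf_le_of_le ⟨_, pi_mem _ fun i => (ν i).2⟩ le_rfl
  · have := hC ρ hρ
    calc ∑ i, iProj (D i) (Q i)
        ≤ ∑ i, InformationTheory.klDiv (ρ.map (Function.eval i)) (Q i) :=
          Finset.sum_le_sum fun i _ => iInf₂_le _ (map_eval_mem ρ hρ i)
      _ ≤ InformationTheory.klDiv ρ (Measure.pi Q) := sum_klDiv_map_eval_le ρ Q

end IProjection

section Convolution

lemma conv_apply {M : Type*} [AddMonoid M] [MeasurableSpace M] [MeasurableAdd₂ M]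
    (μ ν : Measure M) [SFinite ν] {s : Set M} (hs : MeasurableSet s) :
    (μ ∗ ν) s = ∫⁻ x, ν ((x + ·) ⁻¹' s) ∂μ := by
  rw [Measure.conv, Measure.map_apply measurable_add hs, Measure.prod_apply (measurable_add hs)]
  rfl

variable {ι : Type*} [Fintype ι] {M : ι → Type*} [∀ i, MeasurableSpace (M i)]

lemma lintegral_prod_eval (μ : ∀ i, Measure (M i)) [∀ i, IsProbabilityMeasure (μ i)]
    {f : ∀ i, M i → ℝ≥0∞} (hf : ∀ i, Measurable (f i)) :
    ∫⁻ x, ∏ i, f i (x i) ∂Measure.pi μ = ∏ i, ∫⁻ x, f i x ∂μ i := by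
  have indep : iIndepFun (fun i (x : ∀ i, M i) => f i (x i)) (Measure.pi μ) :=
    iIndepFun_pi fun i => (hf i).aemeasurable
  rw [lintegral_prod_eq_prod_lintegral_of_indepFun Finset.univ _ indep (fun i => by fun_prop)]
  exact Finset.prod_congr rfl fun i _ => (measurePreserving_eval μ i).lintegral_comp (hf i)

variable [∀ i, AddMonoid (M i)] [∀ i, MeasurableAdd₂ (M i)]

lemma map_eval_conv_pi (μ : Measure (∀ i, M i)) [SFinite μ] (γ : ∀ i, Measure (M i))
    [∀ i, IsProbabilityMeasure (γ i)] (i : ι) :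
    (μ ∗ Measure.pi γ).map (Function.eval i) = μ.map (Function.eval i) ∗ γ i := by
  rw [← (measurePreserving_eval γ i).map_eq]
  exact Measure.map_conv_addMonoidHom (Pi.evalAddMonoidHom M i) (measurable_pi_apply i)

lemma pi_conv_pi (μ γ : ∀ i, Measure (M i)) [∀ i, IsProbabilityMeasure (μ i)]
    [∀ i, IsProbabilityMeasure (γ i)] :
    Measure.pi μ ∗ Measure.pi γ = Measure.pi fun i => μ i ∗ γ i := by
  refine (Measure.pi_eq fun s hs => ?_).symm
  have measurable_slice (i : ι) : Measurable fun x => γ i ((x + ·) ⁻¹' s i) :=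
    measurable_measure_prodMk_left (measurable_add (hs i))
  calc (Measure.pi μ ∗ Measure.pi γ) (Set.univ.pi s)
      = ∫⁻ x, Measure.pi γ (Set.univ.pi fun i => (x i + ·) ⁻¹' s i) ∂Measure.pi μ :=
        conv_apply _ _ (.univ_pi hs)
    _ = ∫⁻ x, ∏ i, γ i ((x i + ·) ⁻¹' s i) ∂Measure.pi μ := by simp_rw [Measure.pi_pi]
    _ = ∏ i, ∫⁻ x, γ i ((x + ·) ⁻¹' s i) ∂μ i := lintegral_prod_eval μ measurable_slice
    _ = ∏ i, (μ i ∗ γ i) (s i) := Finset.prod_congr rfl fun i _ => (conv_apply _ _ (hs i)).symm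

end Convolution

section AdditiveChannel

/-- The output laws `P_X ∗ γ` of the additive channel with noise law `γ`, over the input
laws `P_X` carried by `S`. -/
def channelOutputs {M : Type*} [AddMonoid M] [MeasurableSpace M] (S : Set M) (γ : Measure M) :
    Set (Measure M) :=
  (· ∗ γ) '' {μ | IsProbabilityMeasure μ ∧ ∀ᵐ x ∂μ, x ∈ S}

lemma isProbabilityMeasure_of_mem_channelOutputs {M : Type*} [AddMonoid M] [MeasurableSpace M]
    [MeasurableAdd₂ M] {S : Set M} {γ ρ : Measure M} [IsProbabilityMeasure γ]
    (hρ : ρ ∈ channelOutputs S γ) : IsProbabilityMeasure ρ := by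
  obtain ⟨μ, ⟨hμ, -⟩, rfl⟩ := hρ
  exact inferInstanceAs (IsProbabilityMeasure (μ ∗ γ))

variable {ι : Type*} [Fintype ι] {M : ι → Type*} [∀ i, AddMonoid (M i)]
  [∀ i, MeasurableSpace (M i)] [∀ i, MeasurableAdd₂ (M i)]

lemma map_eval_mem_channelOutputs {S : ∀ i, Set (M i)} (hS : ∀ i, MeasurableSet (S i))
    {γ : ∀ i, Measure (M i)} [∀ i, IsProbabilityMeasure (γ i)] {ρ : Measure (∀ i, M i)}
    (hρ : ρ ∈ channelOutputs (Set.univ.pi S) (Measure.pi γ)) (i : ι) :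
    ρ.map (Function.eval i) ∈ channelOutputs (S i) (γ i) := by
  obtain ⟨μ, ⟨hμ, hμS⟩, rfl⟩ := hρ
  have eval_meas : AEMeasurable (Function.eval i) μ := (measurable_pi_apply i).aemeasurable
  refine ⟨μ.map (Function.eval i), ⟨Measure.isProbabilityMeasure_map eval_meas, ?_⟩,
    (map_eval_conv_pi μ γ i).symm⟩
  refine (ae_map_iff eval_meas (hS i)).mpr ?_
  filter_upwards [hμS] with x hx using hx i (Set.mem_univ i)

lemma pi_mem_channelOutputs {S : ∀ i, Set (M i)} {γ ν : ∀ i, Measure (M i)}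
    [∀ i, IsProbabilityMeasure (γ i)] (hν : ∀ i, ν i ∈ channelOutputs (S i) (γ i)) :
    Measure.pi ν ∈ channelOutputs (Set.univ.pi S) (Measure.pi γ) := by
  choose μ hμ hμν using hν
  obtain rfl : (fun i => μ i ∗ γ i) = ν := funext hμν
  have (i : ι) : IsProbabilityMeasure (μ i) := (hμ i).1
  refine ⟨Measure.pi μ, ⟨inferInstance, ?_⟩, pi_conv_pi μ γ⟩
  have coord_mem (i : ι) : ∀ᵐ x ∂Measure.pi μ, x i ∈ S i :=
    Measure.tendsto_eval_ae_ae.eventually (hμ i).2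
  filter_upwards [Filter.eventually_all.mpr coord_mem] with x hx i _ using hx i

theorem iproj_single_letterization_general [∀ i, StandardBorelSpace (M i)]
    {S : ∀ i, Set (M i)} (hS : ∀ i, MeasurableSet (S i)) (γ Q : ∀ i, Measure (M i))
    [∀ i, IsProbabilityMeasure (γ i)] [∀ i, IsProbabilityMeasure (Q i)] :
    iProj (channelOutputs (Set.univ.pi S) (Measure.pi γ)) (Measure.pi Q)
      = ∑ i, iProj (channelOutputs (S i) (γ i)) (Q i) :=
  iProj_pi Q (fun _ => isProbabilityMeasure_of_mem_channelOutputs)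
    (fun _ _ => isProbabilityMeasure_of_mem_channelOutputs)
    (fun _ hρ => map_eval_mem_channelOutputs hS hρ) (fun _ => pi_mem_channelOutputs)

end AdditiveChannel

section GaussianChannel

lemma klDiv_eq_coe_klDiv {α : Type*} [MeasurableSpace α] (μ ν : Measure α)
    [IsProbabilityMeasure μ] [IsProbabilityMeasure ν] :
    klDiv μ ν = (InformationTheory.klDiv μ ν : EReal) := by
  unfold klDiv
  split_ifs with h
  · have gibbs := InformationTheory.integral_llr_add_sub_measure_univ_nonneg h.1 h.2
    rw [InformationTheory.klDiv_of_ac_of_integrable h.1 h.2]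
    simp only [probReal_univ, add_sub_cancel_right] at gibbs ⊢
    rw [EReal.coe_ennreal_ofReal, max_eq_left gibbs]
  · rw [InformationTheory.klDiv_eq_top_iff.mpr fun hac hint => h ⟨hac, hint⟩,
      EReal.coe_ennreal_top]

lemma gc_toENNReal_coe : GaloisConnection EReal.toENNReal ((↑) : ℝ≥0∞ → EReal) := by
  intro x y
  rw [← EReal.coe_ennreal_le_coe_ennreal_iff, EReal.coe_toENNReal_eq_max, max_le_iff]
  exact and_iff_right (EReal.coe_ennreal_nonneg y)

lemma uIproj_eq_coe_iProj (n : ℕ) (A P : ℝ) :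
    uIproj n A P = (iProj
      (channelOutputs (Set.univ.pi fun _ : Fin n => Set.Icc (-A) A) (stdGaussianPi n))
      (Measure.pi fun _ => gaussianReal 0 (1 + P).toNNReal) : EReal) := by
  have : IsProbabilityMeasure (stdGaussianPi n) := by unfold stdGaussianPi; infer_instance
  have mem_cube_iff (μ : Measure (Fin n → ℝ)) :
      (∀ᵐ x ∂μ, x ∈ Set.univ.pi fun _ : Fin n => Set.Icc (-A) A) ↔
        μ {x | ∃ j, A < |x j|} = 0 := by
    simp only [ae_iff, Set.mem_univ_pi, Set.mem_Icc, ← abs_le, not_forall, not_le]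
  rw [iProj, channelOutputs, iInf_image, gc_toENNReal_coe.u_iInf₂]
  simp_rw [mem_cube_iff]
  refine iInf_congr fun μ => iInf_congr fun hμ => ?_
  have := hμ.1
  exact klDiv_eq_coe_klDiv (μ ∗ stdGaussianPi n) _

lemma uIproj_eq_mul_iProj (n : ℕ) (A P : ℝ) :
    uIproj n A P = n * (iProj (channelOutputs (Set.Icc (-A) A) (gaussianReal 0 1))
      (gaussianReal 0 (1 + P).toNNReal) : EReal) := by
  rw [uIproj_eq_coe_iProj, stdGaussianPi,
    iproj_single_letterization_general fun _ => measurableSet_Icc, Finset.sum_const,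
    Finset.card_univ, Fintype.card_fin, EReal.coe_ennreal_nsmul,
    EReal.nsmul_eq_mul]

end GaussianChannel

/-- Single-letterization of the `I`-projection: `u_n(A) = n · u_1(A)`. -/
theorem iproj_single_letterization
    (A P : ℝ) (hA : 0 < A) (hP : 0 < P) (n : ℕ) (hn : 1 ≤ n) :
    uIproj n A P = (n : EReal) * uIproj 1 A P := by
  rw [uIproj_eq_mul_iProj n, uIproj_eq_mul_iProj 1, Nat.cast_one, one_mul]
end

section
/- Let P be a probability measure on ℝ^n with coordinate marginals P_1, …, P_n, and let Q = Q_1 ⊗ ⋯ ⊗ Q_n be a product probability measure on ℝ^n. Then the Kullback–Leibler divergence satisfies the superadditivity property D(P ‖ Q) ≥ ∑_{i=1}^n D(P_i ‖ Q_i). -/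
/-!
Write `R` for the product of the marginals `P_i` of `P`. Then `P ≪ R`, because
`dR/dQ = ∏ i, dP_i/dQ_i` is positive `P`-almost everywhere, so the chain rule
`dP/dQ = dP/dR * dR/dQ` yields the exact decomposition
`D(P ‖ Q) = D(P ‖ R) + ∑ i, D(P_i ‖ Q_i)`, in which `D(P ‖ R) ≥ 0` by Gibbs' inequality.
-/

open MeasureTheory ProbabilityTheory

lemma ereal_coe_finsetSum {ι : Type*} (s : Finset ι) (f : ι → ℝ) :
    ((∑ i ∈ s, f i : ℝ) : EReal) = ∑ i ∈ s, (f i : EReal) :=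
  map_sum (⟨⟨Real.toEReal, EReal.coe_zero⟩, EReal.coe_add⟩ : ℝ →+ EReal) f s

section KLDiv

variable {α : Type*} [MeasurableSpace α] {μ ν : Measure α}

lemma klDiv_eq_integral_llr (hμν : μ ≪ ν) (h_int : Integrable (llr μ ν) μ) :
    klDiv μ ν = ((∫ x, llr μ ν x ∂μ : ℝ) : EReal) :=
  if_pos ⟨hμν, h_int⟩

lemma klDiv_nonneg [IsFiniteMeasure μ] [IsFiniteMeasure ν]
    (h : ν.real Set.univ ≤ μ.real Set.univ) : 0 ≤ klDiv μ ν := by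
  unfold klDiv
  split_ifs with hfin
  · have gibbs := InformationTheory.integral_llr_add_sub_measure_univ_nonneg hfin.1 hfin.2
    exact EReal.coe_nonneg.mpr (by linarith)
  · exact le_top

end KLDiv

section AbsoluteContinuity

variable {α : Type*} [MeasurableSpace α] {μ ν κ : Measure α}

lemma absolutelyContinuous_withDensity_of_ae_ne_zero {f : α → ENNReal} (hμν : μ ≪ ν)
    (hf : AEMeasurable f ν) (hf_ne_zero : ∀ᵐ x ∂μ, f x ≠ 0) : μ ≪ ν.withDensity f := by
  intro s hs
  have hνs : ν ({x | f x ≠ 0} ∩ s) = 0 := (withDensity_apply_eq_zero' hf).mp hs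
  refine measure_mono_null_ae ?_ (hμν hνs)
  filter_upwards [hf_ne_zero] with x hfx hxs using ⟨hfx, hxs⟩

lemma ae_toReal_rnDeriv_pos [SigmaFinite μ] [μ.HaveLebesgueDecomposition ν] (hμν : μ ≪ ν) :
    ∀ᵐ x ∂μ, 0 < (μ.rnDeriv ν x).toReal := by
  filter_upwards [Measure.rnDeriv_pos hμν, hμν.ae_le (Measure.rnDeriv_lt_top μ ν)]
    with x h_pos h_lt_top using ENNReal.toReal_pos h_pos.ne' h_lt_top.ne

lemma llr_ae_eq_llr_add_llr [SigmaFinite μ] [SigmaFinite ν] [SigmaFinite κ]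
    (hμν : μ ≪ ν) (hνκ : ν ≪ κ) : llr μ κ =ᵐ[μ] fun x ↦ llr μ ν x + llr ν κ x := by
  filter_upwards [(hμν.trans hνκ).ae_le (Measure.rnDeriv_mul_rnDeriv (κ := κ) hμν),
    ae_toReal_rnDeriv_pos hμν, hμν.ae_le (ae_toReal_rnDeriv_pos hνκ)]
    with x h_mul h_pos h_pos'
  rw [llr, llr, llr, ← h_mul, Pi.mul_apply, ENNReal.toReal_mul,
    Real.log_mul h_pos.ne' h_pos'.ne']

end AbsoluteContinuity

section Pi

variable {ι : Type*} [Fintype ι] {X : ι → Type*} [∀ i, MeasurableSpace (X i)]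
  {μ ν : ∀ i, Measure (X i)}

lemma aemeasurable_prod_comp_eval [∀ i, SigmaFinite (μ i)] {f : ∀ i, X i → ENNReal}
    (hf : ∀ i, AEMeasurable (f i) (μ i)) :
    AEMeasurable (fun x : ∀ i, X i ↦ ∏ i, f i (x i)) (Measure.pi μ) :=
  Finset.aemeasurable_fun_prod _ fun i _ ↦
    (hf i).comp_quasiMeasurePreserving (Measure.quasiMeasurePreserving_eval μ i)

lemma lintegral_fin_prod_eq_prod {n : ℕ} {X : Fin n → Type*} [∀ i, MeasurableSpace (X i)]
    {μ : ∀ i, Measure (X i)} [∀ i, SigmaFinite (μ i)] {f : ∀ i, X i → ENNReal}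
    (hf : ∀ i, AEMeasurable (f i) (μ i)) :
    ∫⁻ x, ∏ i, f i (x i) ∂Measure.pi μ = ∏ i, ∫⁻ x, f i x ∂μ i := by
  induction n with
  | zero => simp
  | succ n ih =>
    calc ∫⁻ x, ∏ i, f i (x i) ∂Measure.pi μ
      _ = ∫⁻ x : X 0 × ∀ i : Fin n, X i.succ, f 0 x.1 * ∏ i, f i.succ (x.2 i)
            ∂(μ 0).prod (Measure.pi fun i ↦ μ i.succ) := by
          rw [← (measurePreserving_piFinSuccAbove μ 0).symm.lintegral_comp_emb
            (MeasurableEquiv.measurableEmbedding _)]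
          simp_rw [MeasurableEquiv.piFinSuccAbove_symm_apply, Fin.insertNthEquiv,
            Fin.prod_univ_succ, Equiv.coe_fn_mk, Fin.insertNth_zero, Fin.cons_succ,
            Fin.zero_succAbove, Fin.cons_zero]
          rfl
      _ = (∫⁻ x, f 0 x ∂μ 0) * ∏ i : Fin n, ∫⁻ x, f i.succ x ∂μ i.succ := by
          rw [lintegral_prod_mul (hf 0) (aemeasurable_prod_comp_eval fun i ↦ hf i.succ),
            ih fun i ↦ hf i.succ]
      _ = ∏ i, ∫⁻ x, f i x ∂μ i := (Fin.prod_univ_succ fun i ↦ ∫⁻ x, f i x ∂μ i).symm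

lemma lintegral_fintype_prod_eq_prod [∀ i, SigmaFinite (μ i)] {f : ∀ i, X i → ENNReal}
    (hf : ∀ i, AEMeasurable (f i) (μ i)) :
    ∫⁻ x, ∏ i, f i (x i) ∂Measure.pi μ = ∏ i, ∫⁻ x, f i x ∂μ i := by
  let e := (Fintype.equivFin ι).symm
  rw [← (measurePreserving_piCongrLeft μ e).lintegral_comp_emb
    (MeasurableEquiv.measurableEmbedding _)]
  simp_rw [← e.prod_comp, MeasurableEquiv.coe_piCongrLeft, Equiv.piCongrLeft_apply_apply]
  exact lintegral_fin_prod_eq_prod fun i ↦ hf (e i)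

lemma pi_withDensity [∀ i, SigmaFinite (μ i)] {f : ∀ i, X i → ENNReal}
    (hf : ∀ i, AEMeasurable (f i) (μ i)) [∀ i, SigmaFinite ((μ i).withDensity (f i))] :
    Measure.pi (fun i ↦ (μ i).withDensity (f i)) =
      (Measure.pi μ).withDensity fun x ↦ ∏ i, f i (x i) := by
  refine Measure.pi_eq fun s hs ↦ ?_
  rw [withDensity_apply _ (MeasurableSet.univ_pi hs), Measure.restrict_pi_pi,
    lintegral_fintype_prod_eq_prod fun i ↦ (hf i).restrict]
  simp_rw [withDensity_apply _ (hs _)]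

variable [∀ i, SigmaFinite (μ i)] [∀ i, SigmaFinite (ν i)]

lemma withDensity_prod_rnDeriv_eq_pi (h : ∀ i, μ i ≪ ν i) :
    (Measure.pi ν).withDensity (fun x ↦ ∏ i, (μ i).rnDeriv (ν i) (x i)) = Measure.pi μ := by
  rw [← pi_withDensity fun i ↦ (Measure.measurable_rnDeriv _ _).aemeasurable]
  simp_rw [Measure.withDensity_rnDeriv_eq _ _ (h _)]

lemma pi_absolutelyContinuous_pi (h : ∀ i, μ i ≪ ν i) : Measure.pi μ ≪ Measure.pi ν := by
  rw [← withDensity_prod_rnDeriv_eq_pi h]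
  exact withDensity_absolutelyContinuous _ _

lemma rnDeriv_pi (h : ∀ i, μ i ≪ ν i) :
    (Measure.pi μ).rnDeriv (Measure.pi ν) =ᵐ[Measure.pi ν]
      fun x ↦ ∏ i, (μ i).rnDeriv (ν i) (x i) := by
  nth_rw 1 [← withDensity_prod_rnDeriv_eq_pi h]
  exact Measure.rnDeriv_withDensity₀ _
    (aemeasurable_prod_comp_eval fun i ↦ (Measure.measurable_rnDeriv _ _).aemeasurable)

lemma llr_pi (h : ∀ i, μ i ≪ ν i) :
    llr (Measure.pi μ) (Measure.pi ν) =ᵐ[Measure.pi μ]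
      fun x ↦ ∑ i, llr (μ i) (ν i) (x i) := by
  have h_pos : ∀ᵐ x ∂Measure.pi μ, ∀ i, 0 < ((μ i).rnDeriv (ν i) (x i)).toReal :=
    ae_all_iff.mpr fun i ↦
      (Measure.quasiMeasurePreserving_eval μ i).ae (ae_toReal_rnDeriv_pos (h i))
  filter_upwards [(pi_absolutelyContinuous_pi h).ae_le (rnDeriv_pi h), h_pos] with x h_prod h_pos
  rw [llr, h_prod, ENNReal.toReal_prod, Real.log_prod fun i _ ↦ (h_pos i).ne']
  rfl

end Pi

section Marginal

variable {ι : Type*} {X : ι → Type*} [∀ i, MeasurableSpace (X i)]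

/-- The marginal law `P_i` of the `i`-th coordinate under a measure `P` on a product space;
an `abbrev`, so that instances on `P.map` are found for it. -/
noncomputable abbrev marginal (P : Measure (∀ i, X i)) (i : ι) : Measure (X i) :=
  P.map fun x ↦ x i

variable [Fintype ι] {P : Measure (∀ i, X i)} {Q : ∀ i, Measure (X i)}

lemma marginal_absolutelyContinuous [∀ i, SigmaFinite (Q i)] (hPQ : P ≪ Measure.pi Q) (i : ι) :
    marginal P i ≪ Q i :=
  (hPQ.map (measurable_pi_apply i)).trans
    (Measure.quasiMeasurePreserving_eval Q i).absolutelyContinuous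

lemma absolutelyContinuous_pi_marginal [IsFiniteMeasure P] [∀ i, SigmaFinite (Q i)]
    (hPQ : P ≪ Measure.pi Q) : P ≪ Measure.pi (marginal P) := by
  have hac := marginal_absolutelyContinuous hPQ
  have h_pos : ∀ᵐ x ∂P, ∀ i, 0 < (marginal P i).rnDeriv (Q i) (x i) :=
    ae_all_iff.mpr fun i ↦
      ae_of_ae_map (measurable_pi_apply i).aemeasurable (Measure.rnDeriv_pos (hac i))
  rw [← withDensity_prod_rnDeriv_eq_pi hac]
  refine absolutelyContinuous_withDensity_of_ae_ne_zero hPQ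
    (aemeasurable_prod_comp_eval fun i ↦ (Measure.measurable_rnDeriv _ _).aemeasurable) ?_
  filter_upwards [h_pos] with x hx
  exact Finset.prod_ne_zero_iff.mpr fun i _ ↦ (hx i).ne'

lemma llr_pi_ae_eq_llr_pi_marginal_add_sum [IsFiniteMeasure P] [∀ i, SigmaFinite (Q i)]
    (hPQ : P ≪ Measure.pi Q) :
    llr P (Measure.pi Q) =ᵐ[P]
      fun x ↦ llr P (Measure.pi (marginal P)) x + ∑ i, llr (marginal P i) (Q i) (x i) := by
  have hac := marginal_absolutelyContinuous hPQ
  have hPR := absolutelyContinuous_pi_marginal hPQ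
  filter_upwards [llr_ae_eq_llr_add_llr hPR (pi_absolutelyContinuous_pi hac),
    hPR.ae_le (llr_pi hac)] with x h_chain h_sum
  rw [h_chain, h_sum]

variable [IsFiniteMeasure P] [∀ i, IsFiniteMeasure (Q i)]

lemma integrable_llr_marginal (hPQ : P ≪ Measure.pi Q)
    (h_int : Integrable (llr P (Measure.pi Q)) P) (i : ι) :
    Integrable (llr (marginal P i) (Q i)) (marginal P i) := by
  classical
  set c := ∏ j ∈ Finset.univ.erase i, Q j Set.univ
  have hc_map : (Measure.pi Q).map (fun x ↦ x i) = c • Q i := Measure.pi_map_eval Q i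
  have hac : marginal P i ≪ c • Q i := hc_map ▸ hPQ.map (measurable_pi_apply i)
  rcases eq_or_ne c 0 with hc | hc
  · have : marginal P i = 0 := by
      rwa [hc, zero_smul, Measure.absolutelyContinuous_zero_iff] at hac
    rw [this]
    exact integrable_zero_measure
  · have hc_top : c ≠ ⊤ := ENNReal.prod_ne_top (by finiteness)
    have h_map : Integrable (llr (marginal P i) (c • Q i)) (marginal P i) :=
      hc_map ▸ InformationTheory.integrable_llr_map hPQ (measurable_pi_apply i) h_int
    have h_smul := llr_smul_right (marginal_absolutelyContinuous hPQ i) c hc hc_top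
    simpa only [integrable_congr h_smul, sub_eq_add_neg, integrable_add_const_iff] using h_map

lemma klDiv_pi_eq_klDiv_pi_marginal_add_sum (hPQ : P ≪ Measure.pi Q)
    (h_int : Integrable (llr P (Measure.pi Q)) P) :
    klDiv P (Measure.pi Q) =
      klDiv P (Measure.pi (marginal P)) + ∑ i, klDiv (marginal P i) (Q i) := by
  have h_ae := llr_pi_ae_eq_llr_pi_marginal_add_sum hPQ
  have h_int_marginal := integrable_llr_marginal hPQ h_int
  have h_int_eval (i : ι) : Integrable (fun x ↦ llr (marginal P i) (Q i) (x i)) P :=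
    (h_int_marginal i).comp_measurable (measurable_pi_apply i)
  have h_int_sum := integrable_finsetSum Finset.univ fun i _ ↦ h_int_eval i
  have h_int_pi : Integrable (llr P (Measure.pi (marginal P))) P :=
    (integrable_congr (h_ae.mono fun x hx ↦ sub_eq_of_eq_add hx)).mp (h_int.sub h_int_sum)
  have h_integral : ∫ x, llr P (Measure.pi Q) x ∂P =
      ∫ x, llr P (Measure.pi (marginal P)) x ∂P +
        ∑ i, ∫ x, llr (marginal P i) (Q i) x ∂marginal P i := by
    rw [integral_congr_ae h_ae, integral_add h_int_pi h_int_sum,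
      integral_finsetSum _ fun i _ ↦ h_int_eval i]
    congr! 2 with i
    exact (integral_map (measurable_pi_apply i).aemeasurable
      (h_int_marginal i).aestronglyMeasurable).symm
  rw [klDiv_eq_integral_llr hPQ h_int, h_integral, EReal.coe_add,
    klDiv_eq_integral_llr (absolutelyContinuous_pi_marginal hPQ) h_int_pi,
    ereal_coe_finsetSum]
  simp_rw [klDiv_eq_integral_llr (marginal_absolutelyContinuous hPQ _) (h_int_marginal _)]

end Marginal

theorem klDiv_superadditive_of_product_reference_general
    {ι : Type*} [Fintype ι] {X : ι → Type*} [∀ i, MeasurableSpace (X i)]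
    (P : Measure (∀ i, X i)) [IsProbabilityMeasure P]
    (Q : ∀ i, Measure (X i)) [∀ i, IsFiniteMeasure (Q i)] :
    ∑ i, klDiv (P.map fun x ↦ x i) (Q i) ≤ klDiv P (Measure.pi Q) := by
  by_cases h : P ≪ Measure.pi Q ∧ Integrable (llr P (Measure.pi Q)) P
  swap
  · exact le_top.trans_eq (if_neg h).symm
  have (i : ι) : IsProbabilityMeasure (marginal P i) :=
    Measure.isProbabilityMeasure_map (measurable_pi_apply i).aemeasurable
  calc ∑ i, klDiv (marginal P i) (Q i)
    _ ≤ klDiv P (Measure.pi (marginal P)) + ∑ i, klDiv (marginal P i) (Q i) :=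
        le_add_of_nonneg_left (klDiv_nonneg (by simp))
    _ = klDiv P (Measure.pi Q) := (klDiv_pi_eq_klDiv_pi_marginal_add_sum h.1 h.2).symm

/-- Superadditivity of relative entropy: if `P` is a probability measure on
`ℝ^n` with coordinate marginals `P_i = P ∘ (eval i)⁻¹` and `Q = ⊗_i Q_i` is a product
probability measure, then `D(P ‖ Q) ≥ ∑ i, D(P_i ‖ Q_i)`. -/
theorem klDiv_superadditive_of_product_reference
    (n : ℕ) (P : Measure (Fin n → ℝ)) [IsProbabilityMeasure P]
    (Q : Fin n → Measure ℝ) [∀ i, IsProbabilityMeasure (Q i)] :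
    ∑ i : Fin n, klDiv (P.map fun x => x i) (Q i) ≤ klDiv P (Measure.pi Q) :=
  klDiv_superadditive_of_product_reference_general P Q
end
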